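/- arXiv:2409.03423 — 3 statements merged into one kernel-verified Lean document; each statement's English description precedes it below -/
import Mathlib

section
/- With the notation above, the function (j,θ) ↦ rank(Z_g(j,θ)) is (M/q)-periodic in j and 1-periodic in θ; moreover for all j ∈ ℤ and a.e. θ, rank(Z_g(j,θ)) ≤ card(𝒦_j), where 𝒦_j = {k ∈ {0,...,p−1} : j + kM ∈ 𝕊}. -/
open MeasureTheory

/-- The discrete Zak transform with period `P`. -/
noncomputable def discreteZak (P : ℕ) (f : ℤ → ℂ) (m : ℤ) (θ : ℝ) : ℂ :=
  ∑' k : ℤ, f (m + k * P) * Complex.exp (2 * Real.pi * Complex.I * k * θ)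

/-- The `qL × p` block matrix `Z_g(j,θ)`, rows indexed by pairs `(l, r)`. -/
noncomputable def Zg (M N p q L : ℕ) (g : Fin L → ℤ → ℂ) (j : ℤ) (θ : ℝ) :
    Matrix (Fin L × Fin q) (Fin p) ℂ :=
  Matrix.of fun lr k =>
    discreteZak (p * M) (g lr.1) (j + (k : ℕ) * (M : ℤ) - (lr.2 : ℕ) * (N : ℤ)) θ

/-!
The discrete Zak transform is quasi-periodic: moving its argument by a multiple of the period
only multiplies it by a phase. Since `qN = pM` is the period of the transforms in `Z_g`, replacing
`j` by `j + M` cyclically permutes the columns of `Z_g(j,θ)` up to phases, and replacing `j` by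
`j + N` does the same to the rows. So the rank has the periods `M` and `N`, hence by Bézout
`gcd(M,N)`, which is `M/q` when `p` and `q` are coprime. Since `𝕊` is `N`-periodic, the column `k`
of `Z_g(j,θ)` is zero unless `j + kM ∈ 𝕊`.
-/

theorem periodic_intGcd {α : Type*} {f : ℤ → α} {a b : ℤ} (ha : Function.Periodic f a)
    (hb : Function.Periodic f b) : Function.Periodic f (Int.gcd a b) := by
  rw [Int.gcd_eq_gcd_ab, mul_comm a, mul_comm b]
  exact (ha.int_mul _).add_period (hb.int_mul _)

theorem div_eq_gcd_of_coprime_of_mul_eq_mul {M N p q : ℕ} (hq : 0 < q) (hpq : p.Coprime q)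
    (hMN : q * N = p * M) : M / q = M.gcd N := by
  obtain ⟨d, rfl⟩ : q ∣ M := hpq.symm.dvd_of_dvd_mul_left ⟨N, hMN.symm⟩
  obtain rfl : N = p * d := Nat.eq_of_mul_eq_mul_left hq (by rw [hMN, mul_left_comm])
  rw [Nat.mul_div_cancel_left _ hq, Nat.gcd_mul_right, hpq.symm.gcd_eq_one, one_mul]

theorem val_finRotate_add_mul_div {n : ℕ} (i : Fin n) :
    (finRotate n i : ℕ) + n * ((i + 1) / n) = i + 1 := by
  have := i.neZero
  rw [finRotate_apply, Fin.val_add, Fin.val_one', Nat.add_mod_mod, Nat.mod_add_div]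

section Rank

variable {m n : Type*} [Fintype n]

theorem rank_eq_of_apply_eq_isUnit_mul {m₀ n₀ R : Type*} [CommRing R] [Finite m] [Fintype n₀]
    {A : Matrix m n R} {B : Matrix m₀ n₀ R} (e₁ : m ≃ m₀) (e₂ : n ≃ n₀) {u : m → R} {v : n → R}
    (hu : ∀ i, IsUnit (u i)) (hv : ∀ k, IsUnit (v k))
    (h : ∀ i k, A i k = u i * B (e₁ i) (e₂ k) * v k) : A.rank = B.rank := by
  classical
  have := Fintype.ofFinite m
  have hA : A = Matrix.diagonal u * B.submatrix e₁ e₂ * Matrix.diagonal v := by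
    ext i k
    rw [Matrix.mul_diagonal, Matrix.diagonal_mul, Matrix.submatrix_apply, h]
  have isUnit_det_u : IsUnit (Matrix.diagonal u).det :=
    (Matrix.isUnit_iff_isUnit_det _).1 (Matrix.isUnit_diagonal.2 (Pi.isUnit_iff.2 hu))
  have isUnit_det_v : IsUnit (Matrix.diagonal v).det :=
    (Matrix.isUnit_iff_isUnit_det _).1 (Matrix.isUnit_diagonal.2 (Pi.isUnit_iff.2 hv))
  rw [hA, Matrix.rank_mul_eq_left_of_isUnit_det _ _ isUnit_det_v,
    Matrix.rank_mul_eq_right_of_isUnit_det _ _ isUnit_det_u, Matrix.rank_submatrix]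

theorem rank_le_card_of_forall_notMem_col_eq_zero {R : Type*} [CommSemiring R]
    [StrongRankCondition R] (A : Matrix m n R) (s : Set n) (hA : ∀ k ∉ s, A.col k = 0) :
    A.rank ≤ Nat.card s := by
  classical
  have hspan : Submodule.span R (Set.range A.col) =
      Submodule.span R (Set.range fun k : s => A.col k) := by
    refine le_antisymm (Submodule.span_le.2 ?_) (Submodule.span_mono ?_)
    · rintro _ ⟨k, rfl⟩
      by_cases hk : k ∈ s
      · exact Submodule.subset_span ⟨⟨k, hk⟩, rfl⟩
      · exact hA k hk ▸ Submodule.zero_mem _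
    · exact Set.range_comp_subset_range _ A.col
  rw [A.rank_eq_finrank_span_cols, hspan, Nat.card_eq_fintype_card]
  exact finrank_range_le_card _

end Rank

section Zak

variable {P : ℕ} {f : ℤ → ℂ}

theorem discreteZak_add_int_mul_period (m n : ℤ) (θ : ℝ) :
    discreteZak P f (m + n * P) θ =
      Complex.exp (-(2 * Real.pi * Complex.I * n * θ)) * discreteZak P f m θ := by
  unfold discreteZak
  rw [← tsum_mul_left, ← (Equiv.addRight n).tsum_eq (fun k : ℤ => Complex.exp _ * _)]
  refine tsum_congr fun k => ?_
  have hk : m + n * (P : ℤ) + k * P = m + (k + n) * P := by ring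
  rw [Equiv.coe_addRight, hk, mul_left_comm, ← Complex.exp_add]
  congr 2
  push_cast
  ring

theorem discreteZak_periodic_one (m : ℤ) : Function.Periodic (discreteZak P f m) 1 := by
  intro θ
  refine tsum_congr fun k => ?_
  have hk : 2 * Real.pi * Complex.I * k * (θ + 1 : ℝ) =
      2 * Real.pi * Complex.I * k * θ + k * (2 * Real.pi * Complex.I) := by
    push_cast
    ring
  rw [hk, Complex.exp_periodic.int_mul k]

theorem discreteZak_eq_zero {m : ℤ} (hf : ∀ k : ℤ, f (m + k * P) = 0) (θ : ℝ) :
    discreteZak P f m θ = 0 := by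
  simp only [discreteZak, hf, zero_mul, tsum_zero]

end Zak

section ZakMatrix

variable {M N p q L : ℕ} {g : Fin L → ℤ → ℂ}

theorem Zg_add_M_apply (j : ℤ) (θ : ℝ) (lr : Fin L × Fin q) (k : Fin p) :
    Zg M N p q L g (j + M) θ lr k =
      Zg M N p q L g j θ lr (finRotate p k) *
        Complex.exp (-(2 * Real.pi * Complex.I * (((k + 1) / p : ℕ) : ℤ) * θ)) := by
  have hk : ((finRotate p k : ℕ) : ℤ) + p * ((k + 1) / p : ℕ) = k + 1 :=
    mod_cast val_finRotate_add_mul_div k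
  have hj : j + M + (k : ℕ) * (M : ℤ) - (lr.2 : ℕ) * (N : ℤ) =
      j + (finRotate p k : ℕ) * (M : ℤ) - (lr.2 : ℕ) * (N : ℤ) +
        (((k + 1) / p : ℕ) : ℤ) * (p * M : ℕ) := by
    rw [Nat.cast_mul]
    linear_combination -(M : ℤ) * hk
  rw [Zg, Zg, Matrix.of_apply, Matrix.of_apply, hj, discreteZak_add_int_mul_period, mul_comm]

theorem Zg_apply_eq_mul_Zg_add_N_apply (hMN : q * N = p * M) (j : ℤ) (θ : ℝ)
    (lr : Fin L × Fin q) (k : Fin p) :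
    Zg M N p q L g j θ lr k =
      Complex.exp (-(2 * Real.pi * Complex.I * (-((lr.2 + 1) / q : ℕ) : ℤ) * θ)) *
        Zg M N p q L g (j + N) θ (lr.1, finRotate q lr.2) k := by
  have hr : ((finRotate q lr.2 : ℕ) : ℤ) + q * ((lr.2 + 1) / q : ℕ) = lr.2 + 1 :=
    mod_cast val_finRotate_add_mul_div lr.2
  have hMN' : (q : ℤ) * N = p * M := mod_cast hMN
  have hj : j + (k : ℕ) * (M : ℤ) - (lr.2 : ℕ) * (N : ℤ) =
      j + N + (k : ℕ) * (M : ℤ) - (finRotate q lr.2 : ℕ) * (N : ℤ) +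
        (-((lr.2 + 1) / q : ℕ) : ℤ) * (p * M : ℕ) := by
    rw [Nat.cast_mul]
    linear_combination (N : ℤ) * hr - (((lr.2 + 1) / q : ℕ) : ℤ) * hMN'
  rw [Zg, Zg, Matrix.of_apply, Matrix.of_apply, hj, discreteZak_add_int_mul_period]

theorem rank_Zg_periodic_M (θ : ℝ) :
    Function.Periodic (fun j => (Zg M N p q L g j θ).rank) M := fun j =>
  rank_eq_of_apply_eq_isUnit_mul (Equiv.refl _) (finRotate p) (fun _ => isUnit_one)
    (fun _ => (Complex.exp_ne_zero _).isUnit)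
    fun lr k => (Zg_add_M_apply j θ lr k).trans (by rw [one_mul, Equiv.refl_apply])

theorem rank_Zg_periodic_N (hMN : q * N = p * M) (θ : ℝ) :
    Function.Periodic (fun j => (Zg M N p q L g j θ).rank) N := fun j => Eq.symm <|
  rank_eq_of_apply_eq_isUnit_mul ((Equiv.refl _).prodCongr (finRotate q)) (Equiv.refl _)
    (fun _ => (Complex.exp_ne_zero _).isUnit) (fun _ => isUnit_one)
    fun lr k => (Zg_apply_eq_mul_Zg_add_N_apply hMN j θ lr k).trans (mul_one _).symm

theorem rank_Zg_periodic_gcd (hMN : q * N = p * M) (θ : ℝ) :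
    Function.Periodic (fun j => (Zg M N p q L g j θ).rank) (M.gcd N : ℕ) := by
  rw [← Int.gcd_natCast_natCast]
  exact periodic_intGcd (rank_Zg_periodic_M θ) (rank_Zg_periodic_N hMN θ)

theorem Zg_periodic_one (j : ℤ) : Function.Periodic (Zg M N p q L g j) 1 := fun θ =>
  Matrix.ext fun _ _ => discreteZak_periodic_one _ θ

theorem Zg_col_eq_zero (hMN : q * N = p * M) {S : Set ℤ} (hper : ∀ j ∈ S, ∀ n : ℤ, j + n * N ∈ S)
    (hg : ∀ l, ∀ j, j ∉ S → g l j = 0) {j : ℤ} {k : Fin p} (hk : j + (k : ℕ) * (M : ℤ) ∉ S)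
    (θ : ℝ) : (Zg M N p q L g j θ).col k = 0 := by
  ext ⟨l, r⟩
  refine discreteZak_eq_zero (fun n => hg l _ fun hn => hk ?_) θ
  have hMN' : (q : ℤ) * N = p * M := mod_cast hMN
  have hj : j + (k : ℕ) * (M : ℤ) - (r : ℕ) * (N : ℤ) + n * (p * M : ℕ) + (r - n * q) * N =
      j + (k : ℕ) * (M : ℤ) := by
    rw [Nat.cast_mul]
    linear_combination -n * hMN'
  exact hj ▸ hper _ hn (r - n * q)

theorem rank_Zg_le_card (hMN : q * N = p * M) {S : Set ℤ}
    (hper : ∀ j ∈ S, ∀ n : ℤ, j + n * N ∈ S) (hg : ∀ l, ∀ j, j ∉ S → g l j = 0) (j : ℤ) (θ : ℝ) :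
    (Zg M N p q L g j θ).rank ≤ Nat.card {k : Fin p // j + (k : ℕ) * (M : ℤ) ∈ S} :=
  rank_le_card_of_forall_notMem_col_eq_zero _ {k : Fin p | j + (k : ℕ) * (M : ℤ) ∈ S}
    fun _ hk => Zg_col_eq_zero hMN hper hg hk θ

end ZakMatrix

theorem stmt9_general (M N p q L : ℕ) (hMN : q * N = p * M)
    (S : Set ℤ) (hper : ∀ j ∈ S, ∀ n : ℤ, j + n * N ∈ S)
    (g : Fin L → ℤ → ℂ) (hg : ∀ l, ∀ j, j ∉ S → g l j = 0) :
    (∀ θ : ℝ, Function.Periodic (fun j => (Zg M N p q L g j θ).rank) (M.gcd N : ℕ)) ∧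
    (∀ j : ℤ, Function.Periodic (fun θ => (Zg M N p q L g j θ).rank) 1) ∧
    (∀ (j : ℤ) (θ : ℝ), (Zg M N p q L g j θ).rank ≤
      Nat.card {k : Fin p // j + (k : ℕ) * (M : ℤ) ∈ S}) :=
  ⟨rank_Zg_periodic_gcd hMN, fun j => (Zg_periodic_one j).comp Matrix.rank,
    rank_Zg_le_card hMN hper hg⟩

/-- `(j,θ) ↦ rank Z_g(j,θ)` is `(M/q)`-periodic in `j`, `1`-periodic in `θ`, and
for all `j`, a.e. `θ`, `rank Z_g(j,θ) ≤ card 𝒦_j` where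
`𝒦_j = {k ∈ {0,...,p-1} : j + kM ∈ 𝕊}`. -/
theorem stmt9 (M N p q L : ℕ) (hM : 0 < M) (hN : 0 < N) (hp : 0 < p) (hq : 0 < q)
    (hL : 0 < L) (hpq : Nat.Coprime p q) (hMN : q * N = p * M)
    (S : Set ℤ) (hper : ∀ j ∈ S, ∀ n : ℤ, j + n * N ∈ S)
    (g : Fin L → lp (fun _ : ℤ => ℂ) 2) (hg : ∀ l, ∀ j, j ∉ S → g l j = 0) :
    (∀ j : ℤ, ∀ᵐ θ : ℝ ∂volume,
      (Zg M N p q L (fun l i => g l i) (j + ((M / q : ℕ) : ℤ)) θ).rank =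
        (Zg M N p q L (fun l i => g l i) j θ).rank) ∧
    (∀ j : ℤ, ∀ᵐ θ : ℝ ∂volume,
      (Zg M N p q L (fun l i => g l i) j (θ + 1)).rank =
        (Zg M N p q L (fun l i => g l i) j θ).rank) ∧
    (∀ j : ℤ, ∀ᵐ θ : ℝ ∂volume,
      (Zg M N p q L (fun l i => g l i) j θ).rank ≤
        Nat.card {k : Fin p // j + (k : ℕ) * (M : ℤ) ∈ S}) := by
  obtain ⟨hj, hθ, hcard⟩ := stmt9_general M N p q L hMN S hper (fun l i => g l i) hg
  rw [div_eq_gcd_of_coprime_of_mul_eq_mul hq hpq hMN]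
  exact ⟨fun j => ae_of_all _ fun θ => hj θ j, fun j => ae_of_all _ (hθ j),
    fun j => ae_of_all _ (hcard j)⟩
end

section
/- With the standing assumptions (𝕊 Nℤ-periodic, qN = pM, gcd(p,q)=1, L ∈ ℕ), the following are equivalent: (1) there exists g = {g_l}_{l<L} ⊂ ℓ²(𝕊) such that the multi-window Gabor system 𝒢(g,L,M,N) is a frame for ℓ²(𝕊); (2) there exists such g making it a Parseval frame; (3) card(𝒦_j) ≤ qL for all j ∈ {0,...,M/q−1}, where 𝒦_j = {k < p : j + kM ∈ 𝕊}. -/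
/-- The Gabor system element `e^{2πim·/M} g(· - nN)`. -/
noncomputable def gaborFn (M N : ℕ) (g : ℤ → ℂ) (m : ℕ) (n : ℤ) (j : ℤ) : ℂ :=
  Complex.exp (2 * Real.pi * Complex.I * m * j / M) * g (j - n * N)

/-- The formal `ℓ²` inner product `⟨f, φ⟩ = Σ_j f(j) conj(φ(j))`. -/
noncomputable def ip (f φ : ℤ → ℂ) : ℂ :=
  ∑' j : ℤ, f j * (starRingEnd ℂ) (φ j)

/-- The frame sum `Σ_{m<M, n∈ℤ, l<L} |⟨f, e^{2πim·/M} g_l(·-nN)⟩|²`. -/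
noncomputable def gaborSum (M N L : ℕ) (g : Fin L → ℤ → ℂ) (f : ℤ → ℂ) : ℝ :=
  ∑' x : Fin M × ℤ × Fin L, ‖ip f (gaborFn M N (g x.2.2) (x.1 : ℕ) x.2.1)‖ ^ 2

/-! Write `M = dq` and `N = dp`. The modulation by `e^{2πi(b+qa)·/M}` differs from that by
`e^{2πib·/M}` by the factor `e^{2πia·/d}`, which is constant on residue classes modulo `d`. Hence a
Gabor frame for `ℓ²(S)`, tested on the functions supported in `S ∩ (j + dℤ) ≃ ℤ × 𝒦_j`, becomes a
frame for `ℓ²(ℤ × 𝒦_j)` formed by the `ℤ`-translates of `qL` generators `ψ_r`. If `ψ_r^*` is the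
canonical dual of `ψ_r`, computing the trace of the identity per `ℤ`-orbit in two ways gives
`card 𝒦_j = ∑ r, ⟪ψ_r, ψ_r^*⟫ ≤ qL`.

Conversely, if `card 𝒦_j ≤ qL` then each `k ∈ 𝒦_j` can be assigned its own pair `(s, l)` with
`s < q` and `l < L`. The points `j + kM + sN` tile `S` under `Nℤ`, and those with a common `l` are
distinct modulo `M`. The windows `g_l` equal to `1 / √M` at the points carrying the label `l` then
form a Parseval frame, by orthogonality of the characters modulo `M`.
-/

open scoped lp InnerProductSpace ComplexConjugate Ring

section SquareSummable

variable {𝕜 I J : Type*} [RCLike 𝕜]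

lemma memℓp_two_iff_summable_norm_sq {f : I → 𝕜} :
    Memℓp f 2 ↔ Summable fun i => ‖f i‖ ^ 2 := by
  simpa using memℓp_gen_iff (p := 2) (E := fun _ : I => 𝕜) (f := f) (by norm_num)

lemma hasSum_norm_sq (f : ℓ²(I, 𝕜)) : HasSum (fun i => ‖f i‖ ^ 2) (‖f‖ ^ 2) := by
  simpa using lp.hasSum_norm (p := 2) (by norm_num) f

lemma norm_eq_of_hasSum_norm_sq {f : ℓ²(I, 𝕜)} {c : ℝ} (hc : 0 ≤ c)
    (hf : HasSum (fun i => ‖f i‖ ^ 2) (c ^ 2)) : ‖f‖ = c :=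
  (sq_eq_sq₀ (norm_nonneg f) hc).1 ((hasSum_norm_sq f).unique hf)

/-- The unitary operator on `ℓ²` that permutes the coordinates, `f ↦ f ∘ σ⁻¹`. -/
noncomputable def permuteCoords (σ : Equiv.Perm I) : ℓ²(I, 𝕜) ≃ₗᵢ[𝕜] ℓ²(I, 𝕜) where
  toFun f := ⟨fun i => f (σ.symm i), memℓp_two_iff_summable_norm_sq.2
    ((hasSum_norm_sq f).summable.comp_injective σ.symm.injective)⟩
  invFun f := ⟨fun i => f (σ i), memℓp_two_iff_summable_norm_sq.2
    ((hasSum_norm_sq f).summable.comp_injective σ.injective)⟩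
  map_add' _ _ := rfl
  map_smul' _ _ := rfl
  left_inv f := by ext i; simp
  right_inv f := by ext i; simp
  norm_map' f := norm_eq_of_hasSum_norm_sq (norm_nonneg f)
    (σ.symm.hasSum_iff.2 (hasSum_norm_sq f))

lemma hasSum_norm_sq_extend (e : I ↪ J) (f : ℓ²(I, 𝕜)) :
    HasSum (fun j => ‖Function.extend e f 0 j‖ ^ 2) (‖f‖ ^ 2) := by
  rw [← e.injective.hasSum_iff]
  · simpa [Function.comp_def, e.injective.extend_apply] using hasSum_norm_sq f
  · intro j hj
    simp [Function.extend_apply' _ _ _ hj]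

/-- Extension by zero `ℓ²(I) → ℓ²(J)` along an embedding `I ↪ J`. -/
noncomputable def extendByZero (e : I ↪ J) (f : ℓ²(I, 𝕜)) : ℓ²(J, 𝕜) :=
  ⟨Function.extend e f 0, memℓp_two_iff_summable_norm_sq.2 (hasSum_norm_sq_extend e f).summable⟩

@[simp]
lemma norm_extendByZero (e : I ↪ J) (f : ℓ²(I, 𝕜)) : ‖extendByZero e f‖ = ‖f‖ :=
  norm_eq_of_hasSum_norm_sq (norm_nonneg f) (hasSum_norm_sq_extend e f)

@[simp]
lemma extendByZero_apply (e : I ↪ J) (f : ℓ²(I, 𝕜)) (i : I) : extendByZero e f (e i) = f i :=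
  e.injective.extend_apply _ _ _

lemma extendByZero_of_notMem_range (e : I ↪ J) (f : ℓ²(I, 𝕜)) {j : J} (hj : j ∉ Set.range e) :
    extendByZero e f j = 0 :=
  Function.extend_apply' _ _ _ hj

/-- Restriction `ℓ²(J) → ℓ²(I)` along an embedding `I ↪ J`, the adjoint of `extendByZero`. -/
noncomputable def restrictCoords (e : I ↪ J) (f : ℓ²(J, 𝕜)) : ℓ²(I, 𝕜) :=
  ⟨fun i => f (e i), memℓp_two_iff_summable_norm_sq.2
    ((hasSum_norm_sq f).summable.comp_injective e.injective)⟩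

@[simp]
lemma restrictCoords_apply (e : I ↪ J) (f : ℓ²(J, 𝕜)) (i : I) : restrictCoords e f i = f (e i) :=
  rfl

lemma inner_extendByZero_right (e : I ↪ J) (f : ℓ²(J, 𝕜)) (h : ℓ²(I, 𝕜)) :
    ⟪f, extendByZero e h⟫_𝕜 = ⟪restrictCoords e f, h⟫_𝕜 := by
  rw [lp.inner_eq_tsum, lp.inner_eq_tsum, ← e.injective.tsum_eq]
  · simp only [extendByZero_apply, restrictCoords_apply]
  · refine Function.support_subset_iff'.2 fun j hj => ?_
    rw [extendByZero_of_notMem_range e h hj, inner_zero_right]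

/-- The standard Hilbert basis of `ℓ²`. -/
noncomputable def stdHilbertBasis (I 𝕜 : Type*) [RCLike 𝕜] : HilbertBasis I 𝕜 ℓ²(I, 𝕜) :=
  ⟨.refl 𝕜 _⟩

lemma stdHilbertBasis_apply [DecidableEq I] (i : I) :
    stdHilbertBasis I 𝕜 i = lp.single 2 i 1 :=
  ((stdHilbertBasis I 𝕜).repr_symm_single i).symm

/-- The unitary representation of `G` on `ℓ²(G × κ)` by left translations of the
first coordinate. -/
noncomputable def translation (G κ 𝕜 : Type*) [RCLike 𝕜] [AddGroup G] :
    Multiplicative G →* (ℓ²(G × κ, 𝕜) ≃ₗᵢ[𝕜] ℓ²(G × κ, 𝕜)) :=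
  MonoidHom.mk' (fun a => permuteCoords ((Equiv.addLeft a.toAdd).prodCongr (.refl κ)))
    fun a b => by
      ext f ⟨g, k⟩
      change f (-(a.toAdd + b.toAdd) + g, k) = f (-b.toAdd + (-a.toAdd + g), k)
      rw [neg_add_rev, add_assoc]

lemma translation_apply {G κ : Type*} [AddGroup G] (a : G) (f : ℓ²(G × κ, 𝕜)) (g : G) (k : κ) :
    translation G κ 𝕜 (.ofAdd a) f (g, k) = f (-a + g, k) :=
  rfl

lemma translation_stdHilbertBasis {G κ : Type*} [AddGroup G] (a g : G) (k : κ) :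
    translation G κ 𝕜 (.ofAdd a) (stdHilbertBasis (G × κ) 𝕜 (g, k)) =
      stdHilbertBasis (G × κ) 𝕜 (a + g, k) := by
  classical
  ext ⟨b, l⟩
  simp only [translation_apply, stdHilbertBasis_apply, lp.single_apply, Pi.single_apply,
    Prod.mk.injEq, neg_add_eq_iff_eq_add]

end SquareSummable

section HilbertFrame

variable {𝕜 H ι : Type*} [RCLike 𝕜] [NormedAddCommGroup H] [InnerProductSpace 𝕜 H]

/-- The family `φ` is a frame for the inner product space `H` with frame bounds `A` and `B`.
Summability of the frame coefficients is required separately since a divergent `∑'` is `0`. -/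
structure IsHilbertFrame (𝕜 : Type*) {H ι : Type*} [RCLike 𝕜] [NormedAddCommGroup H]
    [InnerProductSpace 𝕜 H] (φ : ι → H) (A B : ℝ) : Prop where
  lower_pos : 0 < A
  summable : ∀ f : H, Summable fun i => ‖⟪φ i, f⟫_𝕜‖ ^ 2
  lower_bound : ∀ f : H, A * ‖f‖ ^ 2 ≤ ∑' i, ‖⟪φ i, f⟫_𝕜‖ ^ 2
  upper_bound : ∀ f : H, ∑' i, ‖⟪φ i, f⟫_𝕜‖ ^ 2 ≤ B * ‖f‖ ^ 2

namespace IsHilbertFrame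

variable {φ : ι → H} {A B : ℝ} (hφ : IsHilbertFrame 𝕜 φ A B)

/-- The analysis operator of a frame, sending `f` to its frame coefficients `⟪φ i, f⟫`. -/
noncomputable def analysis : H →L[𝕜] ℓ²(ι, 𝕜) :=
  LinearMap.mkContinuous
    { toFun f := ⟨fun i => ⟪φ i, f⟫_𝕜, memℓp_two_iff_summable_norm_sq.2 (hφ.summable f)⟩
      map_add' _ _ := by ext i; exact inner_add_right _ _ _
      map_smul' _ _ := by ext i; exact inner_smul_right _ _ _ }
    (√B) fun f => by
      rw [← Real.sqrt_sq (norm_nonneg f), ← Real.sqrt_mul' _ (sq_nonneg _)]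
      refine Real.le_sqrt_of_sq_le ?_
      rw [← (hasSum_norm_sq _).tsum_eq]
      exact hφ.upper_bound f

@[simp]
lemma analysis_apply (f : H) (i : ι) : hφ.analysis f i = ⟪φ i, f⟫_𝕜 :=
  rfl

lemma le_norm_sq_analysis (f : H) : A * ‖f‖ ^ 2 ≤ ‖hφ.analysis f‖ ^ 2 :=
  (hφ.lower_bound f).trans_eq (hasSum_norm_sq (hφ.analysis f)).tsum_eq

variable [CompleteSpace H]

/-- The frame operator `f ↦ ∑ i, ⟪φ i, f⟫ • φ i`, encoded as the adjoint of the analysis operator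
composed with the analysis operator. -/
noncomputable def frameOp : H →L[𝕜] H :=
  hφ.analysis.adjoint ∘L hφ.analysis

lemma inner_frameOp_left (f g : H) :
    ⟪hφ.frameOp f, g⟫_𝕜 = ⟪hφ.analysis f, hφ.analysis g⟫_𝕜 := by
  rw [frameOp, ContinuousLinearMap.comp_apply, ContinuousLinearMap.adjoint_inner_left]

lemma inner_frameOp_right (f g : H) :
    ⟪f, hφ.frameOp g⟫_𝕜 = ⟪hφ.analysis f, hφ.analysis g⟫_𝕜 := by
  rw [frameOp, ContinuousLinearMap.comp_apply, ContinuousLinearMap.adjoint_inner_right]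

lemma isUnit_frameOp : IsUnit hφ.frameOp := by
  refine ContinuousLinearMap.isUnit_of_forall_le_norm_inner_map hφ.frameOp
    (c := ⟨A, hφ.lower_pos.le⟩) hφ.lower_pos fun f => ?_
  rw [inner_frameOp_left, inner_self_eq_norm_sq_to_K, norm_pow, RCLike.norm_ofReal, sq_abs,
    mul_comm]
  exact hφ.le_norm_sq_analysis f

@[simp]
lemma frameOp_inverse_apply (f : H) : hφ.frameOp (hφ.frameOp⁻¹ʳ f) = f :=
  DFunLike.congr_fun (Ring.mul_inverse_cancel _ hφ.isUnit_frameOp) f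

@[simp]
lemma inverse_frameOp_apply (f : H) : hφ.frameOp⁻¹ʳ (hφ.frameOp f) = f :=
  DFunLike.congr_fun (Ring.inverse_mul_cancel _ hφ.isUnit_frameOp) f

lemma inner_inverse_frameOp_left (f g : H) :
    ⟪hφ.frameOp⁻¹ʳ f, g⟫_𝕜 = ⟪f, hφ.frameOp⁻¹ʳ g⟫_𝕜 := by
  conv_lhs => rw [← hφ.frameOp_inverse_apply g, inner_frameOp_right, ← inner_frameOp_left,
    frameOp_inverse_apply]

/-- The canonical dual frame, the image of the frame under the inverse of its frame operator. -/
noncomputable def dual (i : ι) : H :=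
  hφ.frameOp⁻¹ʳ (φ i)

lemma hasSum_inner_dual_mul_inner (f g : H) :
    HasSum (fun i => ⟪f, hφ.dual i⟫_𝕜 * ⟪φ i, g⟫_𝕜) ⟪f, g⟫_𝕜 := by
  have hsum := lp.hasSum_inner (𝕜 := 𝕜) (hφ.analysis (hφ.frameOp⁻¹ʳ f)) (hφ.analysis g)
  rw [← inner_frameOp_left, frameOp_inverse_apply] at hsum
  refine hsum.congr_fun fun i => ?_
  rw [analysis_apply, analysis_apply, RCLike.inner_apply', inner_conj_symm,
    inner_inverse_frameOp_left, dual]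

lemma norm_inner_dual_le_one (i : ι) : ‖⟪φ i, hφ.dual i⟫_𝕜‖ ≤ 1 := by
  set c := hφ.analysis (hφ.dual i)
  have hc : ‖⟪φ i, hφ.dual i⟫_𝕜‖ = ‖c‖ ^ 2 := by
    rw [← hφ.frameOp_inverse_apply (φ i), inner_frameOp_left, ← dual, inner_self_eq_norm_sq_to_K,
      norm_pow, RCLike.norm_ofReal, abs_norm]
  have hle : ‖⟪φ i, hφ.dual i⟫_𝕜‖ ≤ ‖c‖ := lp.norm_apply_le_norm (by norm_num) c i
  rw [hc] at hle ⊢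
  nlinarith [norm_nonneg c]

section Symmetry

variable {U : H ≃ₗᵢ[𝕜] H} {σ : Equiv.Perm ι}

lemma frameOp_map (hU : ∀ i, U (φ i) = φ (σ i)) (f : H) :
    hφ.frameOp (U f) = U (hφ.frameOp f) := by
  have hcoeff (g : H) (i : ι) : hφ.analysis (U g) (σ i) = hφ.analysis g i := by
    rw [analysis_apply, analysis_apply, ← hU, U.inner_map_map]
  refine ext_inner_right 𝕜 fun v => ?_
  obtain ⟨v, rfl⟩ := U.surjective v
  rw [U.inner_map_map, inner_frameOp_left, inner_frameOp_left, lp.inner_eq_tsum,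
    lp.inner_eq_tsum, ← σ.tsum_eq]
  simp_rw [hcoeff]

lemma map_dual (hU : ∀ i, U (φ i) = φ (σ i)) (i : ι) : U (hφ.dual i) = hφ.dual (σ i) := by
  rw [← hφ.inverse_frameOp_apply (U (hφ.dual i)), hφ.frameOp_map hU, dual, frameOp_inverse_apply,
    hU, dual]

end Symmetry

end IsHilbertFrame

lemma sum_eq_sum_of_hasSum_prod {G κ R E : Type*} [Fintype κ] [Fintype R]
    [AddCommMonoid E] [TopologicalSpace E] [RegularSpace E] [T2Space E] [ContinuousAdd E]
    {F : G → κ → R → E} {a : κ → E} {b : R → E}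
    (ha : ∀ k, HasSum (fun x : G × R => F x.1 k x.2) (a k))
    (hb : ∀ r, HasSum (fun x : G × κ => F x.1 x.2 r) (b r)) : ∑ k, a k = ∑ r, b r := by
  have hκ : HasSum (fun g => ∑ k, ∑ r, F g k r) (∑ k, a k) :=
    hasSum_sum fun k _ => (ha k).prod_fiberwise fun _ => hasSum_fintype _
  have hR : HasSum (fun g => ∑ r, ∑ k, F g k r) (∑ r, b r) :=
    hasSum_sum fun r _ => (hb r).prod_fiberwise fun _ => hasSum_fintype _
  simp_rw [Finset.sum_comm (s := (Finset.univ : Finset R))] at hR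
  exact hκ.unique hR

theorem card_le_card_of_isHilbertFrame_orbit {G κ R : Type*} [AddGroup G] [Fintype κ] [Fintype R]
    [CompleteSpace H] (U : Multiplicative G →* (H ≃ₗᵢ[𝕜] H)) (e : HilbertBasis (G × κ) 𝕜 H)
    (he : ∀ a g k, U (.ofAdd a) (e (g, k)) = e (a + g, k)) {ψ : R → H} {A B : ℝ}
    (hψ : IsHilbertFrame 𝕜 (fun x : G × R => U (.ofAdd x.1) (ψ x.2)) A B) :
    Fintype.card κ ≤ Fintype.card R := by
  have hU_dual (a : G) (r : R) : U (.ofAdd a) (hψ.dual (0, r)) = hψ.dual (a, r) := by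
    convert hψ.map_dual (σ := (Equiv.addLeft a).prodCongr (.refl R)) (fun x => ?_) (0, r) using 2
    · simp
    · simp [ofAdd_add]
  have hκ (k : κ) : HasSum
      (fun x : G × R => ⟪e (x.1, k), hψ.dual (0, x.2)⟫_𝕜 * ⟪ψ x.2, e (x.1, k)⟫_𝕜) 1 := by
    have hsum := hψ.hasSum_inner_dual_mul_inner (e (0, k)) (e (0, k))
    rw [inner_self_eq_norm_sq_to_K, e.orthonormal.norm_eq_one, RCLike.ofReal_one, one_pow,
      ← ((Equiv.neg G).prodCongr (.refl R)).hasSum_iff] at hsum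
    refine hsum.congr_fun fun ⟨g, r⟩ => ?_
    change _ = ⟪e (0, k), hψ.dual (-g, r)⟫_𝕜 * ⟪U (.ofAdd (-g)) (ψ r), e (0, k)⟫_𝕜
    have hbasis : e (0, k) = U (.ofAdd (-g)) (e (g, k)) := by rw [he, neg_add_cancel]
    rw [hbasis, ← hU_dual (-g), LinearIsometryEquiv.inner_map_map,
      LinearIsometryEquiv.inner_map_map]
  have hR (r : R) : HasSum
      (fun x : G × κ => ⟪e (x.1, x.2), hψ.dual (0, r)⟫_𝕜 * ⟪ψ r, e (x.1, x.2)⟫_𝕜)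
      ⟪ψ r, hψ.dual (0, r)⟫_𝕜 := by
    simpa [mul_comm] using e.hasSum_inner_mul_inner (ψ r) (hψ.dual (0, r))
  have htrace : ∑ _k : κ, (1 : 𝕜) = ∑ r, ⟪ψ r, hψ.dual (0, r)⟫_𝕜 :=
    sum_eq_sum_of_hasSum_prod
      (F := fun g k r => ⟪e (g, k), hψ.dual (0, r)⟫_𝕜 * ⟪ψ r, e (g, k)⟫_𝕜) hκ hR
  have hbound (r : R) : ‖⟪ψ r, hψ.dual (0, r)⟫_𝕜‖ ≤ 1 := by
    simpa using hψ.norm_inner_dual_le_one (0, r)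
  have hle : ‖∑ _k : κ, (1 : 𝕜)‖ ≤ ∑ _r : R, (1 : ℝ) :=
    htrace ▸ norm_sum_le_of_le _ fun r _ => hbound r
  simpa using hle

theorem card_le_card_of_isHilbertFrame_translation {G κ R : Type*} [AddGroup G] [Fintype κ]
    [Fintype R] {ψ : R → ℓ²(G × κ, 𝕜)} {A B : ℝ}
    (hψ : IsHilbertFrame 𝕜 (fun x : G × R => translation G κ 𝕜 (.ofAdd x.1) (ψ x.2)) A B) :
    Fintype.card κ ≤ Fintype.card R :=
  card_le_card_of_isHilbertFrame_orbit _ (stdHilbertBasis _ 𝕜) translation_stdHilbertBasis hψ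

end HilbertFrame

section LatticePoints

variable {d p q : ℕ}

lemma bijective_mul_add_mul [NeZero p] (hpq : p.Coprime q) :
    Function.Bijective fun x : Fin p × ℤ => (x.1 : ℤ) * q + x.2 * p := by
  obtain ⟨u, v, huv⟩ := Nat.isCoprime_iff_coprime.2 hpq
  refine ⟨fun ⟨k, n⟩ ⟨k', n'⟩ h => ?_, fun t => ?_⟩
  · replace h : (k : ℤ) * q + n * p = k' * q + n' * p := h
    have hk : (k : ℤ) ≡ k' [ZMOD p] := Int.modEq_iff_dvd.2
      ⟨u * (k' - k) + v * (n - n'), by linear_combination (k - k') * huv - v * h⟩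
    obtain rfl : k = k' := Fin.ext ((Int.natCast_modEq_iff.1 hk).eq_of_lt_of_lt k.2 k'.2)
    rw [add_right_inj, mul_left_inj' (NeZero.ne (p : ℤ))] at h
    rw [h]
  · let r := (Int.divModEquiv p) (v * t)
    have hr : r.1 * p + (r.2 : ℕ) = v * t := (Int.divModEquiv p).symm_apply_apply (v * t)
    exact ⟨(r.2, u * t + r.1 * q), by linear_combination q * hr + t * huv⟩

/-- The point `j + kM + nN` of `ℤ`, where `M = dq` and `N = dp`. For coprime `p` and `q` every
integer is of this form for unique `0 ≤ j < d`, `0 ≤ k < p` and `n`. -/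
def latticePoint (d p q : ℕ) (j k n : ℤ) : ℤ :=
  j + k * (d * q : ℕ) + n * (d * p : ℕ)

lemma latticePoint_eq (j k n : ℤ) : latticePoint d p q j k n = (k * q + n * p) * d + j := by
  rw [latticePoint]
  push_cast
  ring

lemma latticePoint_comm (j k n : ℤ) : latticePoint d p q j k n = latticePoint d q p j n k := by
  rw [latticePoint_eq, latticePoint_eq, add_comm (k * (q : ℤ))]

lemma latticePoint_injective [NeZero d] [NeZero p] (hpq : p.Coprime q) (j : ℤ) :
    Function.Injective fun x : Fin p × ℤ => latticePoint d p q j x.1 x.2 := by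
  intro x y h
  simp only [latticePoint_eq, add_left_inj, mul_left_inj' (NeZero.ne (d : ℤ))] at h
  exact (bijective_mul_add_mul hpq).injective h

lemma latticePoint_bijective [NeZero d] [NeZero p] (hpq : p.Coprime q) :
    Function.Bijective fun x : Fin d × Fin p × ℤ => latticePoint d p q x.1 x.2.1 x.2.2 := by
  convert (((Int.divModEquiv d).symm.bijective.comp (Prod.swap_bijective)).comp
    (Function.bijective_id.prodMap (bijective_mul_add_mul hpq))) using 2 with x
  exact latticePoint_eq _ _ _

lemma latticePoint_mem_iff {S : Set ℤ} (hS : ∀ j ∈ S, ∀ n : ℤ, j + n * (d * p : ℕ) ∈ S)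
    (j k n : ℤ) : latticePoint d p q j k n ∈ S ↔ j + k * (d * q : ℕ) ∈ S :=
  ⟨fun h => by simpa [latticePoint] using hS _ h (-n), fun h => hS _ h n⟩

lemma latticePoint_add_mul (j k n t : ℤ) :
    latticePoint d p q j k n + t * (d * p : ℕ) = latticePoint d p q j k (n + t) := by
  rw [latticePoint, latticePoint, add_mul, ← add_assoc]

lemma latticePoint_inj [NeZero d] [NeZero p] (hpq : p.Coprime q) {j j' : Fin d} {k k' : Fin p}
    {n n' : ℤ} :
    latticePoint d p q j k n = latticePoint d p q j' k' n' ↔ j = j' ∧ k = k' ∧ n = n' := by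
  simpa only [Prod.mk.injEq] using
    (latticePoint_bijective hpq).injective.eq_iff (a := (j, k, n)) (b := (j', k', n'))

lemma eq_and_eq_of_intCast_latticePoint_eq [NeZero d] [NeZero q] (hpq : p.Coprime q)
    {j j' : Fin d} {s s' : Fin q} {k k' : ℤ}
    (h : (latticePoint d p q j k s : ZMod (d * q)) = latticePoint d p q j' k' s') :
    j = j' ∧ s = s' := by
  obtain ⟨t, ht⟩ := (ZMod.intCast_eq_intCast_iff_dvd_sub _ _ _).1 h.symm
  rw [sub_eq_iff_eq_add', mul_comm, latticePoint_comm, latticePoint_comm j',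
    latticePoint_add_mul] at ht
  exact ((latticePoint_inj hpq.symm).1 ht).imp_right And.left

end LatticePoints

section TimeFrequencyShift

variable {M : ℕ} [NeZero M]

lemma gaborFn_eq (N : ℕ) (g : ℤ → ℂ) (m : ℕ) (n j : ℤ) :
    gaborFn M N g m n j = ZMod.stdAddChar ((m * j : ℤ) : ZMod M) * g (j - n * N) := by
  rw [gaborFn, ZMod.stdAddChar_coe]
  push_cast
  rw [mul_assoc _ (m : ℂ)]

lemma memℓp_gaborFn (N : ℕ) (g : ℓ²(ℤ, ℂ)) (m : ℕ) (n : ℤ) : Memℓp (gaborFn M N g m n) 2 := by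
  have hshift : Summable fun j => ‖g (j - n * N)‖ ^ 2 :=
    (hasSum_norm_sq g).summable.comp_injective (sub_left_injective (b := n * (N : ℤ)))
  simpa only [memℓp_two_iff_summable_norm_sq, gaborFn_eq, norm_mul, AddChar.norm_apply, one_mul]

/-- The time-frequency shift `g ↦ e^{2πim·/M} g(· - nN)` as an operator on `ℓ²(ℤ)`. -/
noncomputable def timeFreqShift (M N : ℕ) [NeZero M] (m : ℕ) (n : ℤ) :
    ℓ²(ℤ, ℂ) →ₗ[ℂ] ℓ²(ℤ, ℂ) where
  toFun g := ⟨gaborFn M N g m n, memℓp_gaborFn N g m n⟩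
  map_add' _ _ := by ext j; exact mul_add _ _ _
  map_smul' _ _ := by ext j; exact mul_left_comm _ _ _

lemma timeFreqShift_apply (N m : ℕ) (n : ℤ) (g : ℓ²(ℤ, ℂ)) (j : ℤ) :
    timeFreqShift M N m n g j =
      ZMod.stdAddChar ((m * j : ℤ) : ZMod M) * g (j - n * N) :=
  gaborFn_eq N g m n j

lemma timeFreqShift_single (N m : ℕ) (n a : ℤ) (c : ℂ) :
    timeFreqShift M N m n (lp.single 2 a c) =
      lp.single 2 (a + n * N)
        (ZMod.stdAddChar ((m * (a + n * N) : ℤ) : ZMod M) * c) := by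
  ext j
  simp only [timeFreqShift_apply, lp.single_apply, Pi.single_apply, sub_eq_iff_eq_add]
  split_ifs with hj
  · rw [hj]
  · rw [mul_zero]

lemma ip_gaborFn (N : ℕ) (f g : ℓ²(ℤ, ℂ)) (m : ℕ) (n : ℤ) :
    ip f (gaborFn M N g m n) = ⟪timeFreqShift M N m n g, f⟫_ℂ := by
  simp only [lp.inner_eq_tsum, RCLike.inner_apply]
  rfl

lemma gaborSum_eq_tsum {N L : ℕ} (g : Fin L → ℓ²(ℤ, ℂ)) (f : ℓ²(ℤ, ℂ)) :
    gaborSum M N L (fun l => g l) f =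
      ∑' x : Fin M × ℤ × Fin L, ‖⟪timeFreqShift M N x.1 x.2.1 (g x.2.2), f⟫_ℂ‖ ^ 2 := by
  simp only [gaborSum, ip_gaborFn]

end TimeFrequencyShift

section FiniteFourier

variable {M : ℕ} [NeZero M] {Λ : Type*} [DecidableEq Λ]

lemma sum_stdAddChar_natCast_mul (a : ZMod M) :
    ∑ m : Fin M, ZMod.stdAddChar (((m : ℕ) : ZMod M) * a) = if a = 0 then (M : ℂ) else 0 := by
  have h := AddChar.sum_mulShift a (ZMod.isPrimitive_stdAddChar M)
  rw [ZMod.card, Nat.cast_ite, Nat.cast_zero] at h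
  obtain ⟨k, rfl⟩ := Nat.exists_eq_succ_of_ne_zero (NeZero.ne M)
  rw [← h]
  exact Fintype.sum_congr _ _ fun m =>
    congrArg (fun x => ZMod.stdAddChar (x * a)) (ZMod.natCast_zmod_val (n := k + 1) m)

/-- The vector of `ℂ^M ⊗ ℂ^Λ` whose component labelled `l` is the normalised character
`m ↦ e^{2πima/M} / √M` and whose other components vanish. Sums over the modulations and the windows
of a Gabor system are norms of combinations of these vectors. -/
noncomputable def fourierVec (x : ZMod M × Λ) : EuclideanSpace ℂ (Fin M × Λ) :=
  WithLp.toLp 2 fun y =>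
    if x.2 = y.2 then ZMod.stdAddChar (((y.1 : ℕ) : ZMod M) * x.1) * (√M : ℂ)⁻¹ else 0

variable [Fintype Λ]

lemma orthonormal_fourierVec : Orthonormal ℂ (fourierVec : ZMod M × Λ → _) := by
  rw [orthonormal_iff_ite]
  rintro ⟨a, l⟩ ⟨b, l'⟩
  have hterm (m : Fin M) (i : Λ) :
      ⟪fourierVec (a, l) (m, i), fourierVec (b, l') (m, i)⟫_ℂ =
        if l = i then
          if l' = i then ZMod.stdAddChar (((m : ℕ) : ZMod M) * (b - a)) * (M : ℂ)⁻¹ else 0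
        else 0 := by
    have hsqrt : (√M : ℂ)⁻¹ * (√M : ℂ)⁻¹ = (M : ℂ)⁻¹ := by
      rw [← mul_inv, ← Complex.ofReal_mul, Real.mul_self_sqrt M.cast_nonneg, Complex.ofReal_natCast]
    by_cases hl : l = i <;> by_cases hl' : l' = i <;>
      simp only [fourierVec, hl, hl', if_true, if_false, RCLike.inner_apply', map_mul, map_inv₀,
        Complex.conj_ofReal, map_zero, zero_mul, mul_zero]
    rw [← hsqrt, mul_sub, sub_eq_add_neg, AddChar.map_add_eq_mul, AddChar.map_neg_eq_conj]
    ring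
  simp_rw [PiLp.inner_apply, Fintype.sum_prod_type, hterm, Finset.sum_ite_eq,
    Finset.mem_univ, if_true]
  obtain rfl | hl := eq_or_ne l l'
  · simp [← Finset.sum_mul, sum_stdAddChar_natCast_mul, sub_eq_zero, eq_comm]
  · simp [hl, hl.symm]

end FiniteFourier

lemma hasSum_prod_of_nonneg_of_fintype {α β : Type*} [Fintype β] {f : α × β → ℝ} {s : ℝ}
    (hf : 0 ≤ f) (h : HasSum (fun a => ∑ b, f (a, b)) s) : HasSum f s := by
  have hsum : Summable f := (summable_prod_of_nonneg hf).2
    ⟨fun _ => (hasSum_fintype _).summable, by simpa only [tsum_fintype] using h.summable⟩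
  have hfiber := hsum.hasSum.prod_fiberwise fun a => hasSum_fintype fun b => f (a, b)
  exact hfiber.unique h ▸ hsum.hasSum

section GaborTiling

variable {M N : ℕ} {X Λ : Type*}

/-- The points `pos x`, `x ∈ X`, tile `S` by translations along `Nℤ`, and points that agree modulo
`M` carry different labels. Each label `l` contributes one window, supported on the points
labelled `l`. -/
structure IsGaborTiling (M N : ℕ) (S : Set ℤ) {X Λ : Type*} (pos : X → ℤ) (lab : X → Λ) : Prop where
  injective_mod : Function.Injective fun x => ((pos x : ZMod M), lab x)
  bijOn : Set.BijOn (fun z : ℤ × X => pos z.2 + z.1 * N) Set.univ S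

variable {S : Set ℤ} {pos : X → ℤ} {lab : X → Λ}

lemma IsGaborTiling.injective_mod_add (hT : IsGaborTiling M N S pos lab) (n : ℤ) :
    Function.Injective fun x => (((pos x + n * N : ℤ) : ZMod M), lab x) := by
  intro x y h
  simp only [Int.cast_add, Prod.mk.injEq, add_left_inj] at h
  exact hT.injective_mod (Prod.ext h.1 h.2)

variable [Fintype X] [DecidableEq Λ]

/-- The window equal to `1 / √M` at the points `pos x` labelled `l` and `0` elsewhere. -/
noncomputable def tilingWindow (M : ℕ) (pos : X → ℤ) (lab : X → Λ) (l : Λ) : ℓ²(ℤ, ℂ) :=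
  ∑ x, lp.single 2 (pos x) (if lab x = l then (√M : ℂ)⁻¹ else 0)

lemma IsGaborTiling.tilingWindow_apply_of_notMem (hT : IsGaborTiling M N S pos lab) (l : Λ) {j : ℤ}
    (hj : j ∉ S) : tilingWindow M pos lab l j = 0 := by
  have hpos (x : X) : j ≠ pos x := by
    rintro rfl
    exact hj (by simpa using hT.bijOn.mapsTo (Set.mem_univ (0, x)))
  rw [tilingWindow, lp.coeFn_sum, Finset.sum_apply]
  exact Finset.sum_eq_zero fun x _ => by rw [lp.single_apply, Pi.single_eq_of_ne (hpos x)]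

variable [NeZero M]

lemma inner_timeFreqShift_tilingWindow (f : ℓ²(ℤ, ℂ)) (m : Fin M) (n : ℤ) (l : Λ) :
    ⟪f, timeFreqShift M N m n (tilingWindow M pos lab l)⟫_ℂ =
      (∑ x, conj (f (pos x + n * N)) •
        fourierVec (((pos x + n * N : ℤ) : ZMod M), lab x)) (m, l) := by
  simp only [tilingWindow, map_sum, timeFreqShift_single, inner_sum, lp.inner_single_right,
    RCLike.inner_apply', WithLp.ofLp_sum, Finset.sum_apply, PiLp.smul_apply, smul_eq_mul,
    fourierVec, mul_ite, mul_zero]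
  push_cast
  rfl

lemma IsGaborTiling.sum_norm_sq_inner_timeFreqShift [Fintype Λ] (hT : IsGaborTiling M N S pos lab)
    (f : ℓ²(ℤ, ℂ)) (n : ℤ) :
    ∑ y : Fin M × Λ, ‖⟪timeFreqShift M N y.1 n (tilingWindow M pos lab y.2), f⟫_ℂ‖ ^ 2 =
      ∑ x, ‖f (pos x + n * N)‖ ^ 2 := by
  have hv := orthonormal_fourierVec.comp _ (hT.injective_mod_add n)
  simp_rw [norm_inner_symm _ f, inner_timeFreqShift_tilingWindow]
  rw [← EuclideanSpace.norm_sq_eq]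
  simpa using hv.orthogonalFamily.norm_sum (fun x => conj (f (pos x + n * N))) Finset.univ

lemma IsGaborTiling.tsum_norm_sq_inner_timeFreqShift [Finite Λ]
    (hT : IsGaborTiling M N S pos lab) {f : ℓ²(ℤ, ℂ)} (hf : ∀ j ∉ S, f j = 0) :
    ∑' x : Fin M × ℤ × Λ,
      ‖⟪timeFreqShift M N x.1 x.2.1 (tilingWindow M pos lab x.2.2), f⟫_ℂ‖ ^ 2 = ‖f‖ ^ 2 := by
  have := Fintype.ofFinite Λ
  let F (z : ℤ × (Fin M × Λ)) : ℝ :=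
    ‖⟪timeFreqShift M N z.2.1 z.1 (tilingWindow M pos lab z.2.2), f⟫_ℂ‖ ^ 2
  have hS : HasSum (fun z : ℤ × X => ‖f (pos z.2 + z.1 * N)‖ ^ 2) (‖f‖ ^ 2) := by
    refine (Function.Injective.hasSum_iff (Set.injOn_univ.1 hT.bijOn.injOn)
      fun j hj => ?_).2 (hasSum_norm_sq f)
    rw [← Set.image_univ, hT.bijOn.image_eq] at hj
    rw [hf j hj, norm_zero, zero_pow two_ne_zero]
  have hℤ : HasSum (fun n => ∑ y, F (n, y)) (‖f‖ ^ 2) := by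
    simp only [F, hT.sum_norm_sq_inner_timeFreqShift]
    exact hS.prod_fiberwise fun _ => hasSum_fintype _
  have hF : HasSum F (‖f‖ ^ 2) := hasSum_prod_of_nonneg_of_fintype (fun _ => by positivity) hℤ
  let E : Fin M × ℤ × Λ ≃ ℤ × (Fin M × Λ) :=
    ((Equiv.prodAssoc _ _ _).symm.trans ((Equiv.prodComm _ _).prodCongr (.refl Λ))).trans
      (Equiv.prodAssoc _ _ _)
  exact (E.hasSum_iff.2 hF).tsum_eq

end GaborTiling

section LatticeTiling

/-- The index set `𝒦_j = {k < p : j + kM ∈ S}`. -/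
abbrev IndexFiber (M p : ℕ) (S : Set ℤ) (j : ℤ) : Type :=
  {k : Fin p // j + (k : ℕ) * (M : ℤ) ∈ S}

variable {d p q : ℕ} [NeZero d] [NeZero p] [NeZero q] {S : Set ℤ}

lemma isGaborTiling_latticePoint {Λ : Type*} (hpq : p.Coprime q)
    (hS : ∀ j ∈ S, ∀ n : ℤ, j + n * (d * p : ℕ) ∈ S)
    (φ : ∀ j : Fin d, IndexFiber (d * q) p S j ↪ Fin q × Λ) :
    IsGaborTiling (d * q) (d * p) S
      (fun x : Σ j : Fin d, IndexFiber (d * q) p S j => latticePoint d p q x.1 x.2.1 (φ x.1 x.2).1)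
      (fun x => (φ x.1 x.2).2) where
  injective_mod := by
    rintro ⟨j, k⟩ ⟨j', k'⟩ h
    obtain ⟨hpos, hlab⟩ := Prod.mk.inj h
    obtain ⟨rfl, hs⟩ : j = j' ∧ (φ j k).1 = (φ j' k').1 :=
      eq_and_eq_of_intCast_latticePoint_eq hpq hpos
    rw [(φ j).injective (Prod.ext hs hlab)]
  bijOn := by
    refine ⟨fun ⟨n, j, k⟩ _ => ?_, fun ⟨n, j, k⟩ _ ⟨n', j', k'⟩ _ h => ?_, fun i hi => ?_⟩
    · change latticePoint .. + _ ∈ S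
      rw [latticePoint_add_mul, latticePoint_mem_iff hS]
      exact k.2
    · replace h : latticePoint .. + _ = latticePoint .. + _ := h
      rw [latticePoint_add_mul, latticePoint_add_mul] at h
      obtain ⟨rfl, hk, hn⟩ : j = j' ∧ k.1 = k'.1 ∧ ((φ j k).1 : ℤ) + n = (φ j' k').1 + n' :=
        (latticePoint_inj hpq).1 h
      obtain rfl := Subtype.ext hk
      rw [add_left_cancel hn]
    · obtain ⟨⟨j, k, n⟩, rfl⟩ := (latticePoint_bijective (d := d) hpq).surjective i
      let k' : IndexFiber (d * q) p S j := ⟨k, (latticePoint_mem_iff hS _ _ _).1 hi⟩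
      refine ⟨(n - (φ j k').1, ⟨j, k'⟩), Set.mem_univ _, ?_⟩
      exact (latticePoint_add_mul ..).trans (by rw [add_sub_cancel])

theorem exists_gaborSum_eq_norm_sq {L : ℕ} (hpq : p.Coprime q)
    (hS : ∀ j ∈ S, ∀ n : ℤ, j + n * (d * p : ℕ) ∈ S)
    (hcard : ∀ j : Fin d, Nat.card (IndexFiber (d * q) p S j) ≤ q * L) :
    ∃ g : Fin L → ℓ²(ℤ, ℂ), (∀ l, ∀ j ∉ S, g l j = 0) ∧
      ∀ f : ℓ²(ℤ, ℂ), (∀ j ∉ S, f j = 0) →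
        gaborSum (d * q) (d * p) L (fun l => g l) f = ‖f‖ ^ 2 := by
  classical
  have hφ (j : Fin d) : Nonempty (IndexFiber (d * q) p S j ↪ Fin q × Fin L) :=
    Function.Embedding.nonempty_of_card_le (by simpa using hcard j)
  have hT := isGaborTiling_latticePoint hpq hS fun j => (hφ j).some
  refine ⟨_, fun l j hj => hT.tilingWindow_apply_of_notMem l hj, fun f hf => ?_⟩
  rw [gaborSum_eq_tsum, hT.tsum_norm_sq_inner_timeFreqShift hf]

end LatticeTiling

lemma tsum_prod_snd {α β : Type*} [Fintype α] (f : β → ℝ) :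
    ∑' x : α × β, f x.2 = Fintype.card α * ∑' b, f b := by
  by_cases hf : Summable fun x : α × β => f x.2
  · simp only [hf.tsum_prod, tsum_fintype, Finset.sum_const, nsmul_eq_mul, Finset.card_univ]
  · have hf' : ¬ Summable f := fun h => hf <| by
      simpa only [one_mul] using summable_mul_of_summable_norm (f := fun _ : α => (1 : ℝ))
        .of_finite h.norm
    rw [tsum_eq_zero_of_not_summable hf, tsum_eq_zero_of_not_summable hf', mul_zero]

section FiberCompression

variable {d p q : ℕ} [NeZero d] [NeZero p] {S : Set ℤ}

/-- The embedding `(n, k) ↦ j + kM + nN` of `ℤ × 𝒦_j` into `ℤ`, where `M = dq` and `N = dp`. Its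
range is the part of the `Nℤ`-periodic set `S` in the residue class of `j` modulo `d`. -/
def fiberEmbedding (hpq : p.Coprime q) (S : Set ℤ) (j : ℤ) : ℤ × IndexFiber (d * q) p S j ↪ ℤ where
  toFun x := latticePoint d p q j x.2.1 x.1
  inj' _ _ h :=
    have hx := Prod.mk.inj (latticePoint_injective hpq j (a₁ := (_, _)) (a₂ := (_, _)) h)
    Prod.ext hx.2 (Subtype.ext hx.1)

lemma extendByZero_fiberEmbedding_of_notMem (hpq : p.Coprime q)
    (hS : ∀ j ∈ S, ∀ n : ℤ, j + n * (d * p : ℕ) ∈ S) (j : ℤ)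
    (h : ℓ²(ℤ × IndexFiber (d * q) p S j, ℂ)) {i : ℤ} (hi : i ∉ S) :
    extendByZero (fiberEmbedding hpq S j) h i = 0 := by
  refine extendByZero_of_notMem_range _ _ ?_
  rintro ⟨⟨n, k⟩, rfl⟩
  exact hi ((latticePoint_mem_iff hS j _ n).2 k.2)

variable [NeZero q]

lemma timeFreqShift_add_mul_apply (N b a : ℕ) (n t j : ℤ) (g : ℓ²(ℤ, ℂ)) :
    timeFreqShift (d * q) N (b + q * a) n g (t * d + j) =
      ZMod.stdAddChar ((q * a * j + b * n * N : ℤ) : ZMod (d * q)) *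
        timeFreqShift (d * q) N b 0 g (t * d + j - n * N) := by
  have hmod : (((b + q * a : ℕ) * (t * d + j) : ℤ) : ZMod (d * q)) =
      (q * a * j + b * n * N : ℤ) + (b * (t * d + j - n * N) : ℤ) := by
    rw [← Int.cast_add, ZMod.intCast_eq_intCast_iff_dvd_sub]
    exact ⟨-(a * t), by push_cast; ring⟩
  rw [timeFreqShift_apply, timeFreqShift_apply, hmod, AddChar.map_add_eq_mul, zero_mul, sub_zero,
    mul_assoc]

lemma restrictCoords_timeFreqShift_add_mul (hpq : p.Coprime q) (j n : ℤ) (b a : ℕ)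
    (g : ℓ²(ℤ, ℂ)) :
    restrictCoords (fiberEmbedding hpq S j) (timeFreqShift (d * q) (d * p) (b + q * a) n g) =
      ZMod.stdAddChar ((q * a * j + b * n * (d * p : ℕ) : ℤ) : ZMod (d * q)) •
        translation ℤ (IndexFiber (d * q) p S j) ℂ (.ofAdd n)
          (restrictCoords (fiberEmbedding hpq S j) (timeFreqShift (d * q) (d * p) b 0 g)) := by
  ext ⟨n', k⟩
  have hshift : latticePoint d p q j k.1 (-n + n') =
      (k.1 * q + n' * p) * d + j - n * (d * p : ℕ) := by
    rw [latticePoint_eq]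
    push_cast
    ring
  change timeFreqShift _ _ _ _ g (latticePoint d p q j k.1 n') =
    _ * timeFreqShift _ _ _ _ g (latticePoint d p q j k.1 (-n + n'))
  rw [hshift, latticePoint_eq, timeFreqShift_add_mul_apply]

lemma norm_inner_timeFreqShift_extendByZero (hpq : p.Coprime q) (j n : ℤ) (b a : ℕ)
    (g : ℓ²(ℤ, ℂ)) (h : ℓ²(ℤ × IndexFiber (d * q) p S j, ℂ)) :
    ‖⟪timeFreqShift (d * q) (d * p) (b + q * a) n g, extendByZero (fiberEmbedding hpq S j) h⟫_ℂ‖ =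
      ‖⟪translation ℤ _ ℂ (.ofAdd n)
        (restrictCoords (fiberEmbedding hpq S j) (timeFreqShift (d * q) (d * p) b 0 g)), h⟫_ℂ‖ := by
  rw [inner_extendByZero_right, restrictCoords_timeFreqShift_add_mul, inner_smul_left, norm_mul,
    RCLike.norm_conj, AddChar.norm_apply, one_mul]

/-- The generators, indexed by `(b, l) ∈ Fin q × Fin L`, of the translation-invariant system on
`ℤ × 𝒦_j` to which the Gabor system of `g` compresses. -/
noncomputable def fiberWindow {L : ℕ} (hpq : p.Coprime q) (S : Set ℤ) (g : Fin L → ℓ²(ℤ, ℂ)) (j : ℤ)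
    (r : Fin q × Fin L) : ℓ²(ℤ × IndexFiber (d * q) p S j, ℂ) :=
  restrictCoords (fiberEmbedding hpq S j) (timeFreqShift (d * q) (d * p) r.1 0 (g r.2))

lemma gaborSum_extendByZero {L : ℕ} (hpq : p.Coprime q) (g : Fin L → ℓ²(ℤ, ℂ)) (j : ℤ)
    (h : ℓ²(ℤ × IndexFiber (d * q) p S j, ℂ)) :
    gaborSum (d * q) (d * p) L (fun l => g l) (extendByZero (fiberEmbedding hpq S j) h) =
      d * ∑' x : ℤ × (Fin q × Fin L),
        ‖⟪translation ℤ _ ℂ (.ofAdd x.1) (fiberWindow hpq S g j x.2), h⟫_ℂ‖ ^ 2 := by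
  let E : Fin d × ℤ × Fin q × Fin L ≃ Fin (d * q) × ℤ × Fin L :=
    { toFun x := (finProdFinEquiv (x.1, x.2.2.1), x.2.1, x.2.2.2)
      invFun y := ((finProdFinEquiv.symm y.1).1, y.2.1, (finProdFinEquiv.symm y.1).2, y.2.2)
      left_inv x := by simp
      right_inv y := by simp only [Prod.mk.eta, Equiv.apply_symm_apply] }
  have hterm (x : Fin d × ℤ × Fin q × Fin L) :
      ‖⟪timeFreqShift (d * q) (d * p) (E x).1 (E x).2.1 (g (E x).2.2),
        extendByZero (fiberEmbedding hpq S j) h⟫_ℂ‖ =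
      ‖⟪translation ℤ _ ℂ (.ofAdd x.2.1) (fiberWindow hpq S g j x.2.2), h⟫_ℂ‖ :=
    norm_inner_timeFreqShift_extendByZero hpq j x.2.1 x.2.2.1 x.1 (g x.2.2.2) h
  rw [gaborSum_eq_tsum, ← E.tsum_eq]
  simp_rw [hterm]
  simpa only [Fintype.card_fin] using tsum_prod_snd (α := Fin d) fun y : ℤ × (Fin q × Fin L) =>
    ‖⟪translation ℤ _ ℂ (.ofAdd y.1) (fiberWindow hpq S g j y.2), h⟫_ℂ‖ ^ 2

end FiberCompression

section GaborFrame

/-- The multi-window Gabor system of `g` satisfies the frame inequalities with bounds `A` and `B`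
on the functions of `ℓ²(ℤ)` supported in `S`. -/
structure IsGaborFrame (M N : ℕ) {L : ℕ} (S : Set ℤ) (g : Fin L → ℓ²(ℤ, ℂ)) (A B : ℝ) : Prop where
  lower_pos : 0 < A
  bounds : ∀ f : ℓ²(ℤ, ℂ), (∀ j ∉ S, f j = 0) →
    A * ‖f‖ ^ 2 ≤ gaborSum M N L (fun l => g l) f ∧ gaborSum M N L (fun l => g l) f ≤ B * ‖f‖ ^ 2

variable {d p q L : ℕ} [NeZero d] [NeZero p] [NeZero q] {S : Set ℤ} {g : Fin L → ℓ²(ℤ, ℂ)}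
  {A B : ℝ}

theorem IsGaborFrame.isHilbertFrame_translation (hg : IsGaborFrame (d * q) (d * p) S g A B)
    (hpq : p.Coprime q) (hS : ∀ j ∈ S, ∀ n : ℤ, j + n * (d * p : ℕ) ∈ S) (j : ℤ) :
    IsHilbertFrame ℂ (fun x : ℤ × (Fin q × Fin L) =>
      translation ℤ (IndexFiber (d * q) p S j) ℂ (.ofAdd x.1) (fiberWindow hpq S g j x.2))
      (A / d) (B / d) := by
  have hd : (0 : ℝ) < d := Nat.cast_pos.2 (NeZero.pos d)
  have hbounds (h : ℓ²(ℤ × IndexFiber (d * q) p S j, ℂ)) :=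
    hg.bounds (extendByZero (fiberEmbedding hpq S j) h) fun _ hi =>
      extendByZero_fiberEmbedding_of_notMem hpq hS j h hi
  simp only [gaborSum_extendByZero, norm_extendByZero, ← div_le_iff₀' hd, ← le_div_iff₀' hd,
    ← div_mul_eq_mul_div] at hbounds
  have hpos : 0 < A / d := div_pos hg.lower_pos hd
  refine ⟨hpos, fun h => ?_, fun h => (hbounds h).1, fun h => (hbounds h).2⟩
  obtain rfl | hh := eq_or_ne h 0
  · simpa only [inner_zero_right, norm_zero, zero_pow two_ne_zero] using summable_zero
  · by_contra hsum
    -- A divergent `∑'` is `0`, which the lower frame bound excludes.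
    have hle := tsum_eq_zero_of_not_summable hsum ▸ (hbounds h).1
    exact (mul_pos hpos (pow_pos (norm_pos_iff.2 hh) 2)).not_ge hle

theorem IsGaborFrame.card_indexFiber_le (hg : IsGaborFrame (d * q) (d * p) S g A B)
    (hpq : p.Coprime q) (hS : ∀ j ∈ S, ∀ n : ℤ, j + n * (d * p : ℕ) ∈ S) (j : ℤ) :
    Nat.card (IndexFiber (d * q) p S j) ≤ q * L := by
  classical
  simpa only [Nat.card_eq_fintype_card, Fintype.card_prod, Fintype.card_fin] using
    card_le_card_of_isHilbertFrame_translation (hg.isHilbertFrame_translation hpq hS j)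

theorem IsGaborFrame.of_gaborSum_eq {M N : ℕ} (hg : ∀ f : ℓ²(ℤ, ℂ), (∀ j ∉ S, f j = 0) →
    gaborSum M N L (fun l => g l) f = ‖f‖ ^ 2) : IsGaborFrame M N S g 1 1 :=
  ⟨one_pos, fun f hf => by simp only [hg f hf, one_mul, le_refl, and_self]⟩

end GaborFrame

/-- Equivalence: existence of a multi-window Gabor frame for `ℓ²(𝕊)`,
existence of a multi-window Gabor Parseval frame for `ℓ²(𝕊)`, and the
condition `card 𝒦_j ≤ qL` for all `j ∈ {0,...,M/q-1}`. -/
theorem stmt18 (M N p q L : ℕ) (hM : 0 < M) (hN : 0 < N) (hp : 0 < p) (hq : 0 < q)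
    (hL : 0 < L) (hpq : Nat.Coprime p q) (hMN : q * N = p * M)
    (S : Set ℤ) (hper : ∀ j ∈ S, ∀ n : ℤ, j + n * N ∈ S) :
    ((∃ g : Fin L → lp (fun _ : ℤ => ℂ) 2, (∀ l, ∀ j, j ∉ S → g l j = 0) ∧
        ∃ A B : ℝ, 0 < A ∧ A ≤ B ∧
          ∀ f : lp (fun _ : ℤ => ℂ) 2, (∀ j, j ∉ S → f j = 0) →
            A * ‖f‖ ^ 2 ≤ gaborSum M N L (fun l i => g l i) (fun i => f i) ∧
            gaborSum M N L (fun l i => g l i) (fun i => f i) ≤ B * ‖f‖ ^ 2) ↔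
      (∀ j : ℤ, 0 ≤ j → j < ((M / q : ℕ) : ℤ) →
        Nat.card {k : Fin p // j + (k : ℕ) * (M : ℤ) ∈ S} ≤ q * L)) ∧
    ((∃ g : Fin L → lp (fun _ : ℤ => ℂ) 2, (∀ l, ∀ j, j ∉ S → g l j = 0) ∧
        ∀ f : lp (fun _ : ℤ => ℂ) 2, (∀ j, j ∉ S → f j = 0) →
          gaborSum M N L (fun l i => g l i) (fun i => f i) = ‖f‖ ^ 2) ↔
      (∀ j : ℤ, 0 ≤ j → j < ((M / q : ℕ) : ℤ) →
        Nat.card {k : Fin p // j + (k : ℕ) * (M : ℤ) ∈ S} ≤ q * L)) := by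
  obtain ⟨d, rfl⟩ := exists_eq_mul_left_of_dvd (hpq.symm.dvd_of_dvd_mul_left ⟨N, hMN.symm⟩)
  obtain rfl : N = d * p := Nat.eq_of_mul_eq_mul_left hq (by rw [hMN]; ring)
  have : NeZero d := ⟨(Nat.pos_of_mul_pos_right hM).ne'⟩
  have : NeZero p := ⟨hp.ne'⟩
  have : NeZero q := ⟨hq.ne'⟩
  rw [Nat.mul_div_cancel _ hq]
  have parseval_of_card (hK : ∀ j : ℤ, 0 ≤ j → j < d →
      Nat.card (IndexFiber (d * q) p S j) ≤ q * L) :=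
    exists_gaborSum_eq_norm_sq hpq hper fun j => hK j (Int.natCast_nonneg j) (Int.ofNat_lt.2 j.2)
  refine ⟨⟨?_, fun hK => ?_⟩, ⟨?_, parseval_of_card⟩⟩
  · rintro ⟨g, -, A, B, hA, -, hfr⟩ j - -
    exact IsGaborFrame.card_indexFiber_le (g := g) ⟨hA, hfr⟩ hpq hper j
  · obtain ⟨g, hgS, hg⟩ := parseval_of_card hK
    exact ⟨g, hgS, 1, 1, one_pos, le_rfl, (IsGaborFrame.of_gaborSum_eq hg).bounds⟩
  · rintro ⟨g, -, hg⟩ j - -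
    exact (IsGaborFrame.of_gaborSum_eq hg).card_indexFiber_le hpq hper j
end

section
/- With the standing assumptions, the following are equivalent: (1) there exists g = {g_l}_{l<L} ⊂ ℓ²(𝕊) such that 𝒢(g,L,M,N) is an orthonormal basis for ℓ²(𝕊); (2) there exists such g making it a Riesz basis for ℓ²(𝕊); (3) card(𝒦_j) = qL for all j ∈ {0,...,M/q−1}. -/
/-- The member of the multi-window Gabor system `𝒢(g,L,M,N)` indexed by
`(m, n, l) ∈ ℕ_M × ℤ × ℕ_L`. -/
noncomputable def gaborMem (M N L : ℕ) (g : Fin L → ℤ → ℂ)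
    (x : Fin M × ℤ × Fin L) : ℤ → ℂ :=
  gaborFn M N (g x.2.2) (x.1 : ℕ) x.2.1

/-- The multi-window Gabor system is complete in `ℓ²(𝕊)`. -/
def GaborComplete (M N L : ℕ) (S : Set ℤ) (g : Fin L → ℤ → ℂ) : Prop :=
  ∀ f : lp (fun _ : ℤ => ℂ) 2, (∀ j, j ∉ S → f j = 0) →
    (∀ x : Fin M × Fin L × ℤ,
      ip (fun j => f j) (gaborMem M N L g (x.1, x.2.2, x.2.1)) = 0) → f = 0

/-- The multi-window Gabor system is an orthonormal system. -/
def GaborOrthonormal (M N L : ℕ) (g : Fin L → ℤ → ℂ) : Prop :=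
  ∀ x y : Fin M × ℤ × Fin L,
    ip (gaborMem M N L g x) (gaborMem M N L g y) = if x = y then 1 else 0

/-- The multi-window Gabor system is a Riesz sequence with bounds `A ≤ B`. -/
def GaborRieszSeq (M N L : ℕ) (g : Fin L → ℤ → ℂ) (A B : ℝ) : Prop :=
  ∀ c : (Fin M × ℤ × Fin L) →₀ ℂ,
    A * ∑ x ∈ c.support, ‖c x‖ ^ 2 ≤
      (∑' j : ℤ, ‖∑ x ∈ c.support, c x * gaborMem M N L g x j‖ ^ 2) ∧
    (∑' j : ℤ, ‖∑ x ∈ c.support, c x * gaborMem M N L g x j‖ ^ 2) ≤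
      B * ∑ x ∈ c.support, ‖c x‖ ^ 2

/-!
Write `𝕊` as the preimage of some `T ⊆ ZMod N` and put `d = gcd(M, N) = M / q`. The system
biorthogonal to a Riesz basis `𝒢(g, L, M, N)` is again a Gabor system, with windows `u_l`. Let
`h = ∑_l g_l · conj u_l`. By Fourier inversion on `ZMod M`, biorthogonality says that `h` sums to
`L / M` over every residue class modulo `M`; the expansion of the unit vector at `j`, evaluated at
`j`, says that `h` sums to `1 / M` or `0` over the class of `j` modulo `N`, according to whether
`j ∈ 𝕊`. Computing the sum of `h` over a class modulo `d` in these two ways shows that the class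
contains `q * L` elements of `T`.

Conversely, if every class modulo `d` contains `q * L` elements of `T`, then `T` can be matched with
`L` copies of `ZMod M` compatibly with reduction modulo `d`, and by the Chinese remainder theorem
every matched pair is represented by an integer. The `N`-translates of the `L` blocks of `M`
integers obtained in this way tile `𝕊`, and for the normalized indicator functions of the blocks the
Gabor system is, up to phases, the discrete Fourier basis on each tile.
-/

section RieszSequence

variable {𝕜 E ι κ : Type*} [RCLike 𝕜]

/-- The inequalities `A‖c‖² ≤ ‖∑ c x • v x‖² ≤ B‖c‖²` defining a Riesz sequence with bounds `A` and
`B`, for finitely supported `c`; the requirement `0 < A` is kept separate. -/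
def IsRieszSequence (𝕜 : Type*) [RCLike 𝕜] [NormedAddCommGroup E] [NormedSpace 𝕜 E]
    (v : ι → E) (A B : ℝ) : Prop :=
  ∀ c : ι →₀ 𝕜, A * (c.sum fun _ z ↦ ‖z‖ ^ 2) ≤ ‖Finsupp.linearCombination 𝕜 v c‖ ^ 2 ∧
    ‖Finsupp.linearCombination 𝕜 v c‖ ^ 2 ≤ B * (c.sum fun _ z ↦ ‖z‖ ^ 2)

lemma isRieszSequence_of_orthonormal [NormedAddCommGroup E] [InnerProductSpace 𝕜 E] {v : ι → E}
    (hv : Orthonormal 𝕜 v) : IsRieszSequence 𝕜 v 1 1 := by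
  intro c
  have parseval : ‖Finsupp.linearCombination 𝕜 v c‖ ^ 2 = c.sum fun _ z ↦ ‖z‖ ^ 2 := by
    have h := hv.inner_finsupp_eq_sum_left c c
    simp only [inner_self_eq_norm_sq_to_K, Finsupp.sum, RCLike.conj_mul] at h
    exact_mod_cast h
  simp [parseval]

namespace IsRieszSequence

variable [NormedAddCommGroup E] [NormedSpace 𝕜 E] {v : ι → E} {A B : ℝ}

lemma comp (h : IsRieszSequence 𝕜 v A B) {f : κ → ι} (hf : Function.Injective f) :
    IsRieszSequence 𝕜 (v ∘ f) A B := by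
  intro c
  simpa only [Finsupp.linearCombination_mapDomain, Finsupp.sum_mapDomain_index_inj hf]
    using h (c.mapDomain f)

lemma norm_apply_le (h : IsRieszSequence 𝕜 v A B) (hA : 0 < A) (c : ι →₀ 𝕜) (x : ι) :
    ‖c x‖ ≤ (√A)⁻¹ * ‖Finsupp.linearCombination 𝕜 v c‖ := by
  have coeff : ‖c x‖ ^ 2 ≤ c.sum fun _ z ↦ ‖z‖ ^ 2 := by
    by_cases hx : x ∈ c.support
    · exact Finset.single_le_sum (f := fun y ↦ ‖c y‖ ^ 2) (fun _ _ ↦ by positivity) hx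
    · rw [Finsupp.notMem_support_iff.mp hx, norm_zero, zero_pow two_ne_zero]
      exact Finset.sum_nonneg fun _ _ ↦ by positivity
  rw [inv_mul_eq_div, le_div_iff₀ (Real.sqrt_pos.mpr hA)]
  refine le_of_sq_le_sq ?_ (norm_nonneg _)
  rw [mul_pow, Real.sq_sqrt hA.le, mul_comm]
  exact (mul_le_mul_of_nonneg_left coeff hA.le).trans (h c).1

lemma linearIndependent (h : IsRieszSequence 𝕜 v A B) (hA : 0 < A) : LinearIndependent 𝕜 v := by
  refine linearIndependent_iff.mpr fun c hc ↦ Finsupp.ext fun x ↦ ?_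
  simpa [hc] using h.norm_apply_le hA c x

lemma exists_biorthogonal [DecidableEq ι] (h : IsRieszSequence 𝕜 v A B) (hA : 0 < A) :
    ∃ φ : ι → StrongDual 𝕜 E, ∀ x y, φ x (v y) = if x = y then 1 else 0 := by
  have hli := h.linearIndependent hA
  let coord (x : ι) : StrongDual 𝕜 (Submodule.span 𝕜 (Set.range v)) :=
    ((Finsupp.lapply x).comp hli.repr).mkContinuous (√A)⁻¹ fun w ↦ by
      have := h.norm_apply_le hA (hli.repr w) x
      rwa [hli.linearCombination_repr] at this
  choose φ hφ _ using fun x ↦ exists_extension_norm_eq _ (coord x)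
  refine ⟨φ, fun x y ↦ ?_⟩
  have hy : v y ∈ Submodule.span 𝕜 (Set.range v) := Submodule.subset_span ⟨y, rfl⟩
  calc φ x (v y) = hli.repr ⟨v y, hy⟩ x := hφ x ⟨v y, hy⟩
    _ = if x = y then 1 else 0 := by
      rw [hli.repr_eq_single y _ rfl, Finsupp.single_apply]
      simp only [eq_comm]

end IsRieszSequence

section Biorthogonal

variable [NormedAddCommGroup E] [NormedSpace 𝕜 E] [DecidableEq ι] {v : ι → E}
  {φ : ι → StrongDual 𝕜 E}

lemma biorthogonal_apply_linearCombination (hφ : ∀ x y, φ x (v y) = if x = y then 1 else 0)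
    (c : ι →₀ 𝕜) (x : ι) : φ x (Finsupp.linearCombination 𝕜 v c) = c x := by
  simp only [Finsupp.linearCombination_apply, Finsupp.sum, map_sum, map_smul, hφ, smul_eq_mul,
    mul_ite, mul_one, mul_zero, Finset.sum_ite_eq]
  exact ite_eq_left_iff.mpr fun hx ↦ (Finsupp.notMem_support_iff.mp hx).symm

lemma IsRieszSequence.norm_sum_smul_le {A B : ℝ} (h : IsRieszSequence 𝕜 v A B) (hA : 0 < A)
    (hB : 0 ≤ B) (hφ : ∀ x y, φ x (v y) = if x = y then 1 else 0) (F : Finset ι) {w : E}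
    (hw : w ∈ Submodule.span 𝕜 (Set.range v)) :
    ‖∑ x ∈ F, φ x w • v x‖ ≤ √(B / A) * ‖w‖ := by
  rw [← Finsupp.range_linearCombination] at hw
  obtain ⟨c, rfl⟩ := hw
  have coeff (x : ι) := biorthogonal_apply_linearCombination hφ c x
  set cF := c.filter (· ∈ F)
  have partial_sum : ∑ x ∈ F, φ x (Finsupp.linearCombination 𝕜 v c) • v x =
      Finsupp.linearCombination 𝕜 v cF := by
    have supported : cF ∈ Finsupp.supported 𝕜 𝕜 (F : Set ι) := fun x hx ↦ by
      simp only [cF, Finsupp.support_filter, Finset.coe_filter, Set.mem_ofPred_eq] at hx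
      exact hx.2
    rw [Finsupp.linearCombination_apply_of_mem_supported 𝕜 supported]
    exact Finset.sum_congr rfl fun x hx ↦ by rw [coeff, Finsupp.filter_apply_pos _ _ hx]
  have truncation : (cF.sum fun _ z ↦ ‖z‖ ^ 2) ≤ c.sum fun _ z ↦ ‖z‖ ^ 2 := by
    rw [Finsupp.sum_filter_index, Finsupp.support_filter]
    exact Finset.sum_le_sum_of_subset_of_nonneg (Finset.filter_subset _ _)
      fun _ _ _ ↦ by positivity
  refine le_of_sq_le_sq ?_ (by positivity)
  rw [partial_sum, mul_pow, Real.sq_sqrt (by positivity)]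
  calc ‖Finsupp.linearCombination 𝕜 v cF‖ ^ 2 ≤ B * (cF.sum fun _ z ↦ ‖z‖ ^ 2) := (h cF).2
    _ ≤ B * (c.sum fun _ z ↦ ‖z‖ ^ 2) := by gcongr
    _ = B / A * (A * (c.sum fun _ z ↦ ‖z‖ ^ 2)) := by field_simp
    _ ≤ B / A * ‖Finsupp.linearCombination 𝕜 v c‖ ^ 2 := by
      gcongr
      exact (h c).1

lemma hasSum_smul_of_mem_closure_span (hφ : ∀ x y, φ x (v y) = if x = y then 1 else 0) {C : ℝ}
    (hbound : ∀ F : Finset ι, ∀ w ∈ Submodule.span 𝕜 (Set.range v),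
      ‖∑ x ∈ F, φ x w • v x‖ ≤ C * ‖w‖)
    {f : E} (hf : f ∈ (Submodule.span 𝕜 (Set.range v)).topologicalClosure) :
    HasSum (fun x ↦ φ x f • v x) f := by
  have hbound' (F : Finset ι) {w : E}
      (hw : w ∈ (Submodule.span 𝕜 (Set.range v)).topologicalClosure) :
      ‖∑ x ∈ F, φ x w • v x‖ ≤ C * ‖w‖ :=
    le_on_closure (hbound F) (by fun_prop) (by fun_prop) hw
  rw [HasSum, SummationFilter.unconditional_filter, Metric.tendsto_atTop]
  intro ε hε
  obtain ⟨w, hw, hfw⟩ := Metric.mem_closure_iff.mp hf (ε / (|C| + 1)) (by positivity)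
  have hfw_mem := Submodule.sub_mem _ hf (Submodule.le_topologicalClosure _ hw)
  rw [SetLike.mem_coe, ← Finsupp.range_linearCombination] at hw
  obtain ⟨c, rfl⟩ := hw
  set w := Finsupp.linearCombination 𝕜 v c with hw_def
  refine ⟨c.support, fun F hF ↦ ?_⟩
  have exact_on_w : ∑ x ∈ F, φ x w • v x = w := by
    simp only [hw_def, biorthogonal_apply_linearCombination hφ]
    exact (Finsupp.linearCombination_apply_of_mem_supported 𝕜 (by exact_mod_cast hF)).symm
  have error_eq : ∑ x ∈ F, φ x f • v x - f = ∑ x ∈ F, φ x (f - w) • v x - (f - w) := by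
    simp only [map_sub, sub_smul, Finset.sum_sub_distrib, exact_on_w]
    abel
  rw [dist_eq_norm] at hfw ⊢
  calc ‖∑ x ∈ F, φ x f • v x - f‖ ≤ ‖∑ x ∈ F, φ x (f - w) • v x‖ + ‖f - w‖ :=
        error_eq ▸ norm_sub_le _ _
    _ ≤ |C| * ‖f - w‖ + ‖f - w‖ := by
      gcongr
      exact (hbound' F hfw_mem).trans (by gcongr; exact le_abs_self C)
    _ = (|C| + 1) * ‖f - w‖ := by ring
    _ < (|C| + 1) * (ε / (|C| + 1)) := by gcongr
    _ = ε := by field_simp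

end Biorthogonal

end RieszSequence

section Completeness

variable {𝕜 E ι : Type*} [RCLike 𝕜] [NormedAddCommGroup E] [InnerProductSpace 𝕜 E]

/-- Completeness of the family `v` in a subspace `K`: only the zero vector of `K` is orthogonal to
every `v x`. The vectors `v x` themselves are not required to lie in `K`. -/
def IsCompleteIn (K : Submodule 𝕜 E) (v : ι → E) : Prop :=
  ∀ f ∈ K, (∀ x, inner 𝕜 (v x) f = 0) → f = 0

lemma IsCompleteIn.le_topologicalClosure_span [CompleteSpace E] {v : ι → E} {K : Submodule 𝕜 E}
    (hcomplete : IsCompleteIn K v) (hK : IsClosed (K : Set E)) (hv : ∀ x, v x ∈ K) :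
    K ≤ (Submodule.span 𝕜 (Set.range v)).topologicalClosure := by
  set U := (Submodule.span 𝕜 (Set.range v)).topologicalClosure
  have hUK : U ≤ K :=
    Submodule.topologicalClosure_minimal _ (Submodule.span_le.mpr (Set.range_subset_iff.mpr hv)) hK
  have : CompleteSpace U := (Submodule.isClosed_topologicalClosure _).completeSpace_coe
  intro f hf
  have hPf : U.starProjection f ∈ U := Submodule.starProjection_apply_mem U f
  have residual : f - U.starProjection f = 0 :=
    hcomplete _ (K.sub_mem hf (hUK hPf)) fun x ↦
      Submodule.sub_starProjection_mem_orthogonal f _ <|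
        Submodule.le_topologicalClosure _ (Submodule.subset_span ⟨x, rfl⟩)
  exact sub_eq_zero.mp residual ▸ hPf

end Completeness

local notation "ℓ²" => lp (fun _ : ℤ ↦ ℂ) 2

section LittleL2

lemma inner_eq_tsum_mul_conj (u f : ℓ²) :
    inner ℂ u f = ∑' j : ℤ, f j * (starRingEnd ℂ) (u j) := by
  rw [lp.inner_eq_tsum]
  rfl

lemma summable_mul_conj (f u : ℓ²) : Summable fun j : ℤ ↦ f j * (starRingEnd ℂ) (u j) :=
  lp.summable_inner (𝕜 := ℂ) u f

lemma norm_sq_eq_tsum (f : ℓ²) : ‖f‖ ^ 2 = ∑' j : ℤ, ‖f j‖ ^ 2 := by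
  simpa using lp.norm_rpow_eq_tsum (p := 2) (by norm_num) f

/-- The subspace `ℓ²(𝕊)` of `ℓ²(ℤ)`. -/
noncomputable def supportedOn (S : Set ℤ) : Submodule ℂ ℓ² :=
  ⨅ j ∈ Sᶜ, (lp.evalCLM ℂ (fun _ : ℤ ↦ ℂ) 2 j).ker

lemma mem_supportedOn {S : Set ℤ} {f : ℓ²} : f ∈ supportedOn S ↔ ∀ j, j ∉ S → f j = 0 := by
  simp only [supportedOn, Submodule.mem_iInf]
  rfl

lemma isClosed_supportedOn (S : Set ℤ) : IsClosed (supportedOn S : Set ℓ²) := by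
  simp only [supportedOn, Submodule.coe_iInf]
  exact isClosed_biInter fun j _ ↦ (lp.evalCLM ℂ (fun _ : ℤ ↦ ℂ) 2 j).isClosed_ker

end LittleL2

section TimeFrequencyShift

variable {M : ℕ} [NeZero M]

lemma memℓp_stdAddChar_mul_shift (m : ZMod M) (k : ℤ) (f : ℓ²) :
    Memℓp (E := fun _ : ℤ ↦ ℂ) (fun j ↦ ZMod.stdAddChar (m * (j : ZMod M)) * f (j - k)) 2 := by
  refine (memℓp_gen_iff (by norm_num)).mpr ?_
  simp only [norm_mul, AddChar.norm_apply, one_mul]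
  exact (Equiv.subRight k).summable_iff.mpr ((memℓp_gen_iff (by norm_num)).mp (lp.memℓp f))

/-- The time-frequency shift `f ↦ e^{2πim·/M} f(· - k)` on `ℓ²(ℤ)`. The frequency lives in `ZMod M`,
so that frequencies can be subtracted and character orthogonality on `ZMod M` applies. -/
noncomputable def tfShift (m : ZMod M) (k : ℤ) : ℓ² →ₗ[ℂ] ℓ² where
  toFun f :=
    ⟨fun j ↦ ZMod.stdAddChar (m * (j : ZMod M)) * f (j - k), memℓp_stdAddChar_mul_shift m k f⟩
  map_add' f g := by
    ext j
    exact mul_add _ _ _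
  map_smul' c f := by
    ext j
    exact mul_left_comm _ _ _

lemma tfShift_apply (m : ZMod M) (k : ℤ) (f : ℓ²) (j : ℤ) :
    tfShift m k f j = ZMod.stdAddChar (m * (j : ZMod M)) * f (j - k) := rfl

lemma tfShift_single (m : ZMod M) (k i : ℤ) (c : ℂ) :
    tfShift m k (lp.single 2 i c) =
      lp.single 2 (i + k) (ZMod.stdAddChar (m * ((i + k : ℤ) : ZMod M)) * c) := by
  ext j
  simp only [tfShift_apply, lp.single_apply, Pi.single_apply, sub_eq_iff_eq_add]
  split_ifs with h
  · simp [h]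
  · simp

lemma inner_tfShift_tfShift (m m' : ZMod M) (k k' : ℤ) (u g : ℓ²) :
    inner ℂ (tfShift m k u) (tfShift m' k' g) =
      ZMod.stdAddChar ((m' - m) * (k : ZMod M)) * inner ℂ u (tfShift (m' - m) (k' - k) g) := by
  rw [inner_eq_tsum_mul_conj, inner_eq_tsum_mul_conj, ← tsum_mul_left,
    ← (Equiv.addRight k).tsum_eq]
  refine tsum_congr fun j ↦ ?_
  have phase : ZMod.stdAddChar (m' * ((j + k : ℤ) : ZMod M)) *
      (starRingEnd ℂ) (ZMod.stdAddChar (m * ((j + k : ℤ) : ZMod M))) =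
      ZMod.stdAddChar ((m' - m) * (k : ZMod M)) * ZMod.stdAddChar ((m' - m) * (j : ZMod M)) := by
    rw [← AddChar.map_neg_eq_conj, ← AddChar.map_add_eq_mul, ← AddChar.map_add_eq_mul]
    congr 1
    push_cast
    ring
  simp only [Equiv.coe_addRight, tfShift_apply, map_mul, add_sub_cancel_right]
  rw [show j + k - k' = j - (k' - k) by ring]
  linear_combination g (j - (k' - k)) * (starRingEnd ℂ) (u j) * phase

end TimeFrequencyShift

section GaborFamily

variable {M : ℕ} [NeZero M] {N : ℕ} {ι : Type*}

/-- The Gabor system `𝒢(g,L,M,N)` as a family of vectors of `ℓ²(ℤ)`, with windows indexed by any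
type and with frequencies in `ZMod M` in place of `{0,...,M-1}`. -/
noncomputable def gaborFamily (M : ℕ) [NeZero M] (N : ℕ) (g : ι → ℓ²) (x : ZMod M × ℤ × ι) : ℓ² :=
  tfShift x.1 (x.2.1 * N) (g x.2.2)

lemma gaborFamily_apply (g : ι → ℓ²) (x : ZMod M × ℤ × ι) (j : ℤ) :
    gaborFamily M N g x j = ZMod.stdAddChar (x.1 * (j : ZMod M)) * g x.2.2 (j - x.2.1 * N) := rfl

lemma gaborFamily_mem_supportedOn {T : Set (ZMod N)} {g : ι → ℓ²}
    (hg : ∀ l, g l ∈ supportedOn (Int.cast ⁻¹' T)) (x : ZMod M × ℤ × ι) :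
    gaborFamily M N g x ∈ supportedOn (Int.cast ⁻¹' T) := by
  refine mem_supportedOn.mpr fun j hj ↦ ?_
  rw [gaborFamily_apply, mem_supportedOn.mp (hg x.2.2), mul_zero]
  simpa using hj

lemma inner_gaborFamily_gaborFamily [DecidableEq ι] {u g : ι → ℓ²}
    (hu : ∀ l y, inner ℂ (u l) (gaborFamily M N g y) = if (0, 0, l) = y then 1 else 0)
    (x y : ZMod M × ℤ × ι) :
    inner ℂ (gaborFamily M N u x) (gaborFamily M N g y) = if x = y then 1 else 0 := by
  obtain ⟨m, n, l⟩ := x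
  obtain ⟨m', n', l'⟩ := y
  have h := hu l (m' - m, n' - n, l')
  have same_index : (0, 0, l) = (m' - m, n' - n, l') ↔ (m, n, l) = (m', n', l') := by
    simp [eq_comm, sub_eq_zero]
  simp only [gaborFamily, inner_tfShift_tfShift] at h ⊢
  rw [← sub_mul, h]
  simp only [same_index]
  split_ifs with heq
  · obtain ⟨rfl, -, -⟩ := by simpa using heq
    simp
  · exact mul_zero _

end GaborFamily

section Interface

variable {M N L : ℕ} [NeZero M]

/-- Identifies the index set of `gaborMem` with that of `gaborFamily` by reducing frequencies
modulo `M`. -/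
def gaborIndexEquiv (M L : ℕ) [NeZero M] : Fin M × ℤ × Fin L ≃ ZMod M × ℤ × Fin L :=
  Equiv.prodCongrLeft fun _ ↦
    { toFun := fun m ↦ ((m : ℕ) : ZMod M)
      invFun := fun t ↦ ⟨t.val, ZMod.val_lt t⟩
      left_inv := fun m ↦ Fin.ext (ZMod.val_cast_of_lt m.isLt)
      right_inv := ZMod.natCast_zmod_val }

lemma gaborMem_eq_gaborFamily (g : Fin L → ℓ²) (x : Fin M × ℤ × Fin L) :
    gaborMem M N L (fun l i ↦ g l i) x = gaborFamily M N g (gaborIndexEquiv M L x) := by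
  ext j
  have phase : ZMod.stdAddChar (((x.1 : ℕ) : ZMod M) * (j : ZMod M)) =
      Complex.exp (2 * Real.pi * Complex.I * (x.1 : ℕ) * j / M) := by
    have h := ZMod.stdAddChar_coe (N := M) ((x.1 : ℕ) * j)
    push_cast at h
    rw [h, mul_assoc (2 * Real.pi * Complex.I)]
  exact congrArg (· * g x.2.2 (j - x.2.1 * N)) phase.symm

lemma ip_gaborMem (g : Fin L → ℓ²) (f : ℓ²) (x : Fin M × ℤ × Fin L) :
    ip (fun j ↦ f j) (gaborMem M N L (fun l i ↦ g l i) x) =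
      inner ℂ (gaborFamily M N g (gaborIndexEquiv M L x)) f := by
  rw [gaborMem_eq_gaborFamily, inner_eq_tsum_mul_conj, ip]

lemma gaborOrthonormal_iff (g : Fin L → ℓ²) :
    GaborOrthonormal M N L (fun l i ↦ g l i) ↔ Orthonormal ℂ (gaborFamily M N g) := by
  have entry (x y : Fin M × ℤ × Fin L) :
      ip (gaborMem M N L (fun l i ↦ g l i) x) (gaborMem M N L (fun l i ↦ g l i) y) =
        inner ℂ (gaborFamily M N g (gaborIndexEquiv M L y))
          (gaborFamily M N g (gaborIndexEquiv M L x)) := by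
    rw [← ip_gaborMem, ← gaborMem_eq_gaborFamily]
  rw [orthonormal_iff_ite, ← (gaborIndexEquiv M L).forall_congr_right, GaborOrthonormal,
    forall_comm]
  simp only [← (gaborIndexEquiv M L).forall_congr_right, entry, EmbeddingLike.apply_eq_iff_eq,
    eq_comm]

lemma gaborRieszSeq_iff (g : Fin L → ℓ²) (A B : ℝ) :
    GaborRieszSeq M N L (fun l i ↦ g l i) A B ↔ IsRieszSequence ℂ (gaborFamily M N g) A B := by
  have norm_sq (c : (Fin M × ℤ × Fin L) →₀ ℂ) :
      ∑' j : ℤ, ‖∑ x ∈ c.support, c x * gaborMem M N L (fun l i ↦ g l i) x j‖ ^ 2 =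
        ‖Finsupp.linearCombination ℂ (gaborFamily M N g ∘ gaborIndexEquiv M L) c‖ ^ 2 := by
    simp only [norm_sq_eq_tsum, gaborMem_eq_gaborFamily, Finsupp.linearCombination_apply,
      Finsupp.sum, lp.coeFn_sum, Finset.sum_apply, lp.coeFn_smul, Pi.smul_apply, smul_eq_mul,
      Function.comp_apply]
  have comp_iff : IsRieszSequence ℂ (gaborFamily M N g ∘ gaborIndexEquiv M L) A B ↔
      IsRieszSequence ℂ (gaborFamily M N g) A B := by
    refine ⟨fun h ↦ ?_, fun h ↦ h.comp (gaborIndexEquiv M L).injective⟩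
    simpa only [Function.comp_assoc, Equiv.self_comp_symm, Function.comp_id]
      using h.comp (gaborIndexEquiv M L).symm.injective
  simp only [GaborRieszSeq, norm_sq, ← comp_iff]
  rfl

lemma gaborComplete_iff (S : Set ℤ) (g : Fin L → ℓ²) :
    GaborComplete M N L S (fun l i ↦ g l i) ↔
      IsCompleteIn (supportedOn S) (gaborFamily M N g) := by
  simp only [GaborComplete, IsCompleteIn, mem_supportedOn, ip_gaborMem]
  refine forall₂_congr fun f _ ↦ imp_congr ?_ Iff.rfl
  simp only [← (gaborIndexEquiv M L).forall_congr_right, Prod.forall]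
  exact forall_congr' fun _ ↦ forall_comm

end Interface

section ResidueSum

/-- The sum of `F` over the residue class of `s` modulo `n`. -/
noncomputable def residueSum (n : ℕ) (F : ℤ → ℂ) (s : ZMod n) : ℂ :=
  ∑' j : ℤ, if (j : ZMod n) = s then F j else 0

lemma summable_ite_intCast_eq {n : ℕ} {F : ℤ → ℂ} (hF : Summable F) (s : ZMod n) :
    Summable fun j : ℤ ↦ if (j : ZMod n) = s then F j else 0 :=
  (hF.indicator {j : ℤ | (j : ZMod n) = s}).congr fun j ↦ by
    simp only [Set.indicator_apply, Set.mem_ofPred_eq]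

lemma residueSum_sum {ι : Type*} (n : ℕ) (F : ι → ℤ → ℂ) (t : Finset ι)
    (hF : ∀ i ∈ t, Summable (F i)) (s : ZMod n) :
    residueSum n (fun j ↦ ∑ i ∈ t, F i j) s = ∑ i ∈ t, residueSum n (F i) s := by
  simp only [residueSum]
  rw [← Summable.tsum_finsetSum fun i hi ↦ summable_ite_intCast_eq (hF i hi) s]
  exact tsum_congr fun j ↦ by split_ifs <;> simp

lemma residueSum_intCast {n : ℕ} [NeZero n] (F : ℤ → ℂ) (j : ℤ) :
    residueSum n F (j : ZMod n) = ∑' k : ℤ, F (j - k * n) := by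
  have hn : (n : ℤ) ≠ 0 := mod_cast NeZero.ne n
  have hinj : Function.Injective fun k : ℤ ↦ j - k * n := fun k k' h ↦
    mul_right_cancel₀ hn (sub_right_injective h)
  rw [residueSum, ← hinj.tsum_eq]
  · exact tsum_congr fun k ↦ by simp
  · intro i hi
    obtain ⟨hij, -⟩ := ite_ne_right_iff.mp hi
    obtain ⟨k, hk⟩ := (ZMod.intCast_eq_intCast_iff_dvd_sub i j n).mp hij
    exact ⟨k, by linear_combination hk⟩

lemma residueSum_of_dvd {d n : ℕ} [NeZero n] (hdn : d ∣ n) {F : ℤ → ℂ} (hF : Summable F)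
    (r : ZMod d) :
    residueSum d F r = ∑ s : ZMod n with ZMod.castHom hdn (ZMod d) s = r, residueSum n F s := by
  simp only [residueSum]
  rw [← Summable.tsum_finsetSum fun s _ ↦ summable_ite_intCast_eq hF s]
  exact tsum_congr fun j ↦ by
    simp only [Finset.sum_ite_eq, Finset.mem_filter_univ, map_intCast]

lemma sum_stdAddChar_mul {M : ℕ} [NeZero M] (t : ZMod M) :
    ∑ m : ZMod M, ZMod.stdAddChar (m * t) = if t = 0 then (M : ℂ) else 0 := by
  rw [AddChar.sum_mulShift t (ZMod.isPrimitive_stdAddChar M), ZMod.card]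
  split_ifs <;> simp

lemma card_mul_residueSum {M : ℕ} [NeZero M] {F : ℤ → ℂ} (hF : Summable F) (t : ZMod M) :
    M * residueSum M F t = ∑ m : ZMod M,
      ZMod.stdAddChar (-(m * t)) * ∑' j : ℤ, ZMod.stdAddChar (m * (j : ZMod M)) * F j := by
  have hsum (m : ZMod M) : Summable fun j : ℤ ↦ ZMod.stdAddChar (m * (j : ZMod M)) * F j :=
    .of_norm (by simpa only [norm_mul, AddChar.norm_apply, one_mul] using hF.norm)
  simp only [residueSum, ← tsum_mul_left]
  rw [← Summable.tsum_finsetSum fun m _ ↦ (hsum m).mul_left _]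
  refine tsum_congr fun j ↦ ?_
  calc (M : ℂ) * (if (j : ZMod M) = t then F j else 0)
      = (if (j : ZMod M) - t = 0 then (M : ℂ) else 0) * F j := by simp [sub_eq_zero]
    _ = ∑ m : ZMod M, ZMod.stdAddChar (m * ((j : ZMod M) - t)) * F j := by
      rw [← sum_stdAddChar_mul, Finset.sum_mul]
    _ = _ := Finset.sum_congr rfl fun m _ ↦ by
      rw [← mul_assoc, ← AddChar.map_add_eq_mul]
      congr 2
      ring

end ResidueSum

section ResidueCount

variable {d n : ℕ}

/-- The number of elements of `T ⊆ ZMod n` in the residue class of `r` modulo a divisor `d` of `n`;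
for `n = N` and `d = gcd(M, N)` it equals the `card 𝒦_j` of the paper. -/
noncomputable def residueCount (hdn : d ∣ n) (T : Set (ZMod n)) (r : ZMod d) : ℕ :=
  {s ∈ T | ZMod.castHom hdn (ZMod d) s = r}.ncard

lemma residueCount_eq_sum [NeZero n] (hdn : d ∣ n) (T : Set (ZMod n)) (r : ZMod d) :
    (residueCount hdn T r : ℂ) =
      ∑ s : ZMod n with ZMod.castHom hdn (ZMod d) s = r, T.indicator 1 s := by
  classical
  rw [residueCount, Set.ncard_eq_toFinset_card']
  simp only [Set.indicator_apply, Pi.one_apply, Finset.sum_boole, Finset.filter_filter]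
  congr 2
  ext s
  simp only [Set.mem_toFinset, Set.mem_ofPred_eq, Finset.mem_filter_univ, and_comm]

end ResidueCount

section Necessity

variable {M N : ℕ} [NeZero M] {ι : Type*} {g u : ι → ℓ²}

lemma IsRieszSequence.exists_dual_windows [DecidableEq ι] {A B : ℝ}
    (h : IsRieszSequence ℂ (gaborFamily M N g) A B) (hA : 0 < A) :
    ∃ u : ι → ℓ², ∀ x y,
      inner ℂ (gaborFamily M N u x) (gaborFamily M N g y) = if x = y then 1 else 0 := by
  obtain ⟨φ, hφ⟩ := h.exists_biorthogonal hA
  refine ⟨fun l ↦ (InnerProductSpace.toDual ℂ ℓ²).symm (φ (0, 0, l)),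
    inner_gaborFamily_gaborFamily fun l y ↦ ?_⟩
  rw [InnerProductSpace.toDual_symm_apply, hφ]

lemma IsRieszSequence.hasSum_inner_smul_gaborFamily [DecidableEq ι] {A B : ℝ} {T : Set (ZMod N)}
    (h : IsRieszSequence ℂ (gaborFamily M N g) A B) (hA : 0 < A) (hB : 0 ≤ B)
    (hg : ∀ l, g l ∈ supportedOn (Int.cast ⁻¹' T))
    (hcomplete : IsCompleteIn (supportedOn (Int.cast ⁻¹' T)) (gaborFamily M N g))
    (hu : ∀ x y, inner ℂ (gaborFamily M N u x) (gaborFamily M N g y) = if x = y then 1 else 0)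
    {f : ℓ²} (hf : f ∈ supportedOn (Int.cast ⁻¹' T)) :
    HasSum (fun x ↦ inner ℂ (gaborFamily M N u x) f • gaborFamily M N g x) f :=
  hasSum_smul_of_mem_closure_span (φ := fun x ↦ innerSL ℂ (gaborFamily M N u x)) hu
    (fun F _ hw ↦ h.norm_sum_smul_le hA hB hu F hw)
    (hcomplete.le_topologicalClosure_span (isClosed_supportedOn _)
      (gaborFamily_mem_supportedOn hg) hf)

lemma card_mul_residueSum_mul_conj_eq_one [DecidableEq ι]
    (hu : ∀ x y, inner ℂ (gaborFamily M N u x) (gaborFamily M N g y) = if x = y then 1 else 0)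
    (l : ι) (t : ZMod M) :
    M * residueSum M (fun j ↦ g l j * (starRingEnd ℂ) (u l j)) t = 1 := by
  have fourier_coeff (m : ZMod M) : ∑' j : ℤ, ZMod.stdAddChar (m * (j : ZMod M)) *
      (g l j * (starRingEnd ℂ) (u l j)) = if m = 0 then 1 else 0 := by
    have h := hu (0, 0, l) (m, 0, l)
    rw [inner_eq_tsum_mul_conj] at h
    simpa [gaborFamily_apply, mul_assoc, eq_comm] using h
  rw [card_mul_residueSum (summable_mul_conj _ _)]
  simp [fourier_coeff]

lemma conj_gaborFamily_mul_gaborFamily (x : ZMod M × ℤ × ι) (j : ℤ) :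
    (starRingEnd ℂ) (gaborFamily M N u x j) * gaborFamily M N g x j =
      g x.2.2 (j - x.2.1 * N) * (starRingEnd ℂ) (u x.2.2 (j - x.2.1 * N)) := by
  have unimodular : (starRingEnd ℂ) (ZMod.stdAddChar (x.1 * (j : ZMod M))) *
      ZMod.stdAddChar (x.1 * (j : ZMod M)) = 1 := by
    rw [RCLike.conj_mul, AddChar.norm_apply, RCLike.ofReal_one, one_pow]
  simp only [gaborFamily_apply, map_mul]
  linear_combination g x.2.2 (j - x.2.1 * N) *
    (starRingEnd ℂ) (u x.2.2 (j - x.2.1 * N)) * unimodular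

lemma card_mul_residueSum_sum_mul_conj_eq_one [NeZero N] [Fintype ι] {j : ℤ}
    (hexpand : HasSum
      (fun x ↦ inner ℂ (gaborFamily M N u x) (lp.single 2 j (1 : ℂ) : ℓ²) • gaborFamily M N g x)
      (lp.single 2 j (1 : ℂ) : ℓ²)) :
    M * residueSum N (fun i ↦ ∑ l, g l i * (starRingEnd ℂ) (u l i)) (j : ZMod N) = 1 := by
  have hasSum_at : HasSum (fun x : ZMod M × ℤ × ι ↦
      g x.2.2 (j - x.2.1 * N) * (starRingEnd ℂ) (u x.2.2 (j - x.2.1 * N))) 1 := by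
    have term_at (x : ZMod M × ℤ × ι) : lp.evalCLM ℂ (fun _ : ℤ ↦ ℂ) 2 j
        (inner ℂ (gaborFamily M N u x) (lp.single 2 j (1 : ℂ) : ℓ²) • gaborFamily M N g x) =
          g x.2.2 (j - x.2.1 * N) * (starRingEnd ℂ) (u x.2.2 (j - x.2.1 * N)) := by
      rw [map_smul, lp.inner_single_right, RCLike.inner_apply, one_mul,
        ← conj_gaborFamily_mul_gaborFamily]
      rfl
    have single_at : lp.evalCLM ℂ (fun _ : ℤ ↦ ℂ) 2 j (lp.single 2 j (1 : ℂ)) = 1 :=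
      lp.single_apply_self (E := fun _ : ℤ ↦ ℂ) 2 j 1
    simpa only [term_at, single_at] using hexpand.mapL (lp.evalCLM ℂ (fun _ : ℤ ↦ ℂ) 2 j)
  calc M * residueSum N (fun i ↦ ∑ l, g l i * (starRingEnd ℂ) (u l i)) (j : ZMod N)
      = ∑ _m : ZMod M, ∑' n : ℤ, ∑ l, g l (j - n * N) * (starRingEnd ℂ) (u l (j - n * N)) := by
        rw [residueSum_intCast, Finset.sum_const, Finset.card_univ, ZMod.card, nsmul_eq_mul]
    _ = 1 := by
        rw [← hasSum_at.tsum_eq, hasSum_at.summable.tsum_prod, tsum_fintype (β := ZMod M)]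
        refine Finset.sum_congr rfl fun m _ ↦ ?_
        rw [(hasSum_at.summable.prod_factor m).tsum_prod]
        exact tsum_congr fun n ↦ (tsum_fintype _).symm

lemma card_mul_residueSum_sum_mul_conj_eq_indicator [NeZero N] [Fintype ι] [DecidableEq ι] {A B : ℝ}
    {T : Set (ZMod N)} (h : IsRieszSequence ℂ (gaborFamily M N g) A B) (hA : 0 < A) (hB : 0 ≤ B)
    (hg : ∀ l, g l ∈ supportedOn (Int.cast ⁻¹' T))
    (hcomplete : IsCompleteIn (supportedOn (Int.cast ⁻¹' T)) (gaborFamily M N g))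
    (hu : ∀ x y, inner ℂ (gaborFamily M N u x) (gaborFamily M N g y) = if x = y then 1 else 0)
    (s : ZMod N) :
    M * residueSum N (fun i ↦ ∑ l, g l i * (starRingEnd ℂ) (u l i)) s = T.indicator 1 s := by
  obtain ⟨j, rfl⟩ := ZMod.intCast_surjective s
  by_cases hj : (j : ZMod N) ∈ T
  · rw [Set.indicator_of_mem hj]
    refine card_mul_residueSum_sum_mul_conj_eq_one
      (h.hasSum_inner_smul_gaborFamily hA hB hg hcomplete hu (mem_supportedOn.mpr fun i hi ↦ ?_))
    have hij : i ≠ j := fun hij ↦ hi (hij ▸ hj)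
    exact lp.single_apply_ne (E := fun _ : ℤ ↦ ℂ) 2 j 1 hij
  · have vanishes (n : ℤ) (l : ι) : g l (j - n * N) = 0 :=
      mem_supportedOn.mp (hg l) _ (by simpa using hj)
    simp [residueSum_intCast, Set.indicator_of_notMem hj, vanishes]

theorem IsRieszSequence.residueCount_eq [NeZero N] [Fintype ι] {A B : ℝ} {T : Set (ZMod N)}
    (h : IsRieszSequence ℂ (gaborFamily M N g) A B) (hA : 0 < A) (hB : 0 ≤ B)
    (hg : ∀ l, g l ∈ supportedOn (Int.cast ⁻¹' T))
    (hcomplete : IsCompleteIn (supportedOn (Int.cast ⁻¹' T)) (gaborFamily M N g))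
    {d : ℕ} (hdM : d ∣ M) (hdN : d ∣ N) (r : ZMod d) :
    residueCount hdN T r = residueCount hdM Set.univ r * Fintype.card ι := by
  classical
  obtain ⟨u, hu⟩ := h.exists_dual_windows hA
  set H : ℤ → ℂ := fun j ↦ ∑ l, g l j * (starRingEnd ℂ) (u l j)
  have hH : Summable H := summable_sum fun l _ ↦ summable_mul_conj (g l) (u l)
  have mod_M (t : ZMod M) : M * residueSum M H t = Fintype.card ι := by
    rw [residueSum_sum M _ _ fun l _ ↦ summable_mul_conj (g l) (u l), Finset.mul_sum]
    simp [card_mul_residueSum_mul_conj_eq_one hu]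
  have mod_N (s : ZMod N) : M * residueSum N H s = T.indicator 1 s :=
    card_mul_residueSum_sum_mul_conj_eq_indicator h hA hB hg hcomplete hu s
  suffices (residueCount hdN T r : ℂ) = residueCount hdM Set.univ r * Fintype.card ι by
    exact_mod_cast this
  calc (residueCount hdN T r : ℂ) = M * residueSum d H r := by
        simp only [residueCount_eq_sum, ← mod_N, residueSum_of_dvd hdN hH, Finset.mul_sum]
    _ = residueCount hdM Set.univ r * Fintype.card ι := by
        simp only [residueSum_of_dvd hdM hH, Finset.mul_sum, residueCount_eq_sum, mod_M,
          Finset.sum_mul, Set.indicator_univ, Pi.one_apply, one_mul]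

end Necessity

section Sufficiency

variable {M N : ℕ} {ι : Type*}

lemma exists_intCast_eq_and_intCast_eq (t : ZMod M) (s : ZMod N)
    (h : ZMod.castHom (Nat.gcd_dvd_left M N) (ZMod (M.gcd N)) t =
      ZMod.castHom (Nat.gcd_dvd_right M N) (ZMod (M.gcd N)) s) :
    ∃ j : ℤ, (j : ZMod M) = t ∧ (j : ZMod N) = s := by
  obtain ⟨a, rfl⟩ := ZMod.intCast_surjective t
  obtain ⟨b, rfl⟩ := ZMod.intCast_surjective s
  rw [map_intCast, map_intCast, ZMod.intCast_eq_intCast_iff_dvd_sub] at h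
  obtain ⟨c, hc⟩ := h
  rw [Nat.gcd_eq_gcd_ab] at hc
  refine ⟨a + M * (M.gcdA N * c), by simp, ?_⟩
  rw [show a + M * (M.gcdA N * c) = b - N * (M.gcdB N * c) by linear_combination -hc]
  simp

lemma exists_equiv_of_residueCount_eq [NeZero M] [NeZero N] [Fintype ι] {d : ℕ} (hdM : d ∣ M)
    (hdN : d ∣ N) {T : Set (ZMod N)}
    (hcount : ∀ r : ZMod d, residueCount hdN T r = residueCount hdM Set.univ r * Fintype.card ι) :
    ∃ σ : ι × ZMod M ≃ T, ∀ x,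
      ZMod.castHom hdN (ZMod d) (σ x : ZMod N) = ZMod.castHom hdM (ZMod d) x.2 := by
  have card_fibre (r : ZMod d) :
      Nat.card {x : ι × ZMod M // ZMod.castHom hdM (ZMod d) x.2 = r} =
        Nat.card {s : T // ZMod.castHom hdN (ZMod d) s = r} := by
    have fibre_eq : {x : ι × ZMod M | ZMod.castHom hdM (ZMod d) x.2 = r} =
        Set.univ ×ˢ {t ∈ Set.univ | ZMod.castHom hdM (ZMod d) t = r} := by
      ext
      simp
    calc _ = {x : ι × ZMod M | ZMod.castHom hdM (ZMod d) x.2 = r}.ncard := Nat.card_coe_set_eq _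
      _ = residueCount hdN T r := by
        rw [fibre_eq, Set.ncard_prod, Set.ncard_univ, Nat.card_eq_fintype_card, hcount, mul_comm,
          residueCount]
      _ = _ := (Nat.card_coe_set_eq _).symm.trans
        (Nat.card_congr (Equiv.subtypeSubtypeEquivSubtypeInter _ _)).symm
  let fibre_equiv (r : ZMod d) := (Finite.card_eq.mp (card_fibre r)).some
  exact ⟨Equiv.ofFiberEquiv fibre_equiv, Equiv.ofFiberEquiv_map fibre_equiv⟩

lemma exists_points_of_residueCount_eq [NeZero M] [NeZero N] [Fintype ι] {T : Set (ZMod N)}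
    (hcount : ∀ r : ZMod (M.gcd N), residueCount (Nat.gcd_dvd_right M N) T r =
      residueCount (Nat.gcd_dvd_left M N) Set.univ r * Fintype.card ι) :
    ∃ b : ι × ZMod M → ℤ, (∀ x, (b x : ZMod M) = x.2) ∧
      (Function.Injective fun x ↦ (b x : ZMod N)) ∧ (Set.range fun x ↦ (b x : ZMod N)) = T := by
  obtain ⟨σ, hσ⟩ := exists_equiv_of_residueCount_eq _ _ hcount
  choose b hbM hbN using fun x ↦ exists_intCast_eq_and_intCast_eq x.2 (σ x : ZMod N) (hσ x).symm
  refine ⟨b, hbM, ?_, ?_⟩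
  · simp only [hbN]
    exact Subtype.val_injective.comp σ.injective
  · simp only [hbN]
    exact (σ.surjective.range_comp Subtype.val).trans Subtype.range_coe

variable [NeZero M]

/-- The window with value `M^{-1/2}` at the points `b (l, t)`, `t ∈ ZMod M`; the points are
meant to represent every residue class modulo `M` once for each `l`. -/
noncomputable def pointWindow (b : ι × ZMod M → ℤ) (l : ι) : ℓ² :=
  ∑ t : ZMod M, lp.single 2 (b (l, t)) (√M : ℂ)⁻¹

variable {b : ι × ZMod M → ℤ}

lemma pointWindow_mem_supportedOn {S : Set ℤ} (hb : ∀ x, b x ∈ S) (l : ι) :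
    pointWindow b l ∈ supportedOn S :=
  Submodule.sum_mem _ fun t _ ↦ mem_supportedOn.mpr fun _ hj ↦
    lp.single_apply_ne (E := fun _ : ℤ ↦ ℂ) 2 _ _ fun h ↦ hj (h ▸ hb (l, t))

lemma inner_gaborFamily_pointWindow (hbM : ∀ x, (b x : ZMod M) = x.2) (f : ℓ²)
    (x : ZMod M × ℤ × ι) :
    inner ℂ (gaborFamily M N (pointWindow b) x) f =
      (√M : ℂ)⁻¹ * ZMod.stdAddChar (-(x.1 * ((x.2.1 * N : ℤ) : ZMod M))) *
        ZMod.dft (fun t ↦ f (b (x.2.2, t) + x.2.1 * N)) x.1 := by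
  simp only [gaborFamily, pointWindow, map_sum, tfShift_single, sum_inner, ZMod.dft_apply,
    Finset.mul_sum, lp.inner_single_left, RCLike.inner_apply]
  refine Finset.sum_congr rfl fun t _ ↦ ?_
  have phase : (starRingEnd ℂ) (ZMod.stdAddChar
      (x.1 * ((b (x.2.2, t) + x.2.1 * N : ℤ) : ZMod M))) =
      ZMod.stdAddChar (-(x.1 * ((x.2.1 * N : ℤ) : ZMod M))) * ZMod.stdAddChar (-(t * x.1)) := by
    rw [← AddChar.map_neg_eq_conj, ← AddChar.map_add_eq_mul, Int.cast_add, hbM]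
    congr 1
    ring
  rw [map_mul, phase, map_inv₀, Complex.conj_ofReal, smul_eq_mul]
  ring

lemma pointWindow_apply_sub [NeZero N] [DecidableEq ι]
    (hinj : Function.Injective fun x ↦ (b x : ZMod N)) (l l' : ι) (n : ℤ) (t : ZMod M) :
    pointWindow b l' (b (l, t) - n * N) = if (n, l') = (0, l) then (√M : ℂ)⁻¹ else 0 := by
  have meet_iff (t' : ZMod M) :
      b (l, t) - n * N = b (l', t') ↔ (n, l') = (0, l) ∧ t = t' := by
    refine ⟨fun h ↦ ?_, by rintro ⟨⟨⟩, rfl⟩; simp⟩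
    obtain ⟨rfl, rfl⟩ : l = l' ∧ t = t' := Prod.mk.inj <| hinj <| by
      simpa using congrArg (Int.cast : ℤ → ZMod N) h
    simpa [NeZero.ne N] using h
  simp only [pointWindow, lp.coeFn_sum, Finset.sum_apply, lp.single_apply, Pi.single_apply,
    meet_iff, ite_and]
  split_ifs <;> simp

lemma orthonormal_gaborFamily_pointWindow [NeZero N] (hbM : ∀ x, (b x : ZMod M) = x.2)
    (hinj : Function.Injective fun x ↦ (b x : ZMod N)) :
    Orthonormal ℂ (gaborFamily M N (pointWindow b)) := by
  classical
  refine orthonormal_iff_ite.mpr (inner_gaborFamily_gaborFamily fun l ⟨m, n, l'⟩ ↦ ?_)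
  have normalization : (√M : ℂ)⁻¹ * (√M : ℂ)⁻¹ * M = 1 := by
    have hsq : (√M : ℂ) * √M = M := mod_cast Real.mul_self_sqrt (Nat.cast_nonneg M)
    have hM : (M : ℂ) ≠ 0 := mod_cast NeZero.ne M
    rw [← mul_inv, hsq, inv_mul_cancel₀ hM]
  calc inner ℂ (pointWindow b l) (gaborFamily M N (pointWindow b) (m, n, l'))
      = ∑ t, (√M : ℂ)⁻¹ * (ZMod.stdAddChar (t * m) * pointWindow b l' (b (l, t) - n * N)) := by
        rw [pointWindow, sum_inner]
        refine Finset.sum_congr rfl fun t _ ↦ ?_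
        rw [lp.inner_single_left, gaborFamily_apply, RCLike.inner_apply, hbM, mul_comm t]
        rw [map_inv₀, Complex.conj_ofReal]
        ring
    _ = if (n, l') = (0, l) then (√M : ℂ)⁻¹ * (√M : ℂ)⁻¹ * ∑ t, ZMod.stdAddChar (t * m) else 0 := by
        simp only [pointWindow_apply_sub hinj, Finset.mul_sum]
        split_ifs
        · exact Finset.sum_congr rfl fun _ _ ↦ by ring
        · simp
    _ = if (0, 0, l) = (m, n, l') then 1 else 0 := by
        rw [sum_stdAddChar_mul]
        by_cases hm : m = 0
        · simp only [hm, if_true, normalization, Prod.mk.injEq, true_and, eq_comm]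
        · simp [hm, Ne.symm hm]

lemma isCompleteIn_gaborFamily_pointWindow {T : Set (ZMod N)}
    (hbM : ∀ x, (b x : ZMod M) = x.2) (hrange : T ⊆ Set.range fun x ↦ (b x : ZMod N)) :
    IsCompleteIn (supportedOn (Int.cast ⁻¹' T)) (gaborFamily M N (pointWindow b)) := by
  intro f hf hinner
  have dft_eq_zero (n : ℤ) (l : ι) : ZMod.dft (fun t ↦ f (b (l, t) + n * N)) = 0 := by
    ext m
    have phase_ne_zero : ZMod.stdAddChar (-(m * ((n * N : ℤ) : ZMod M))) ≠ 0 :=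
      norm_ne_zero_iff.mp (by rw [AddChar.norm_apply]; exact one_ne_zero)
    have h := hinner (m, n, l)
    rw [inner_gaborFamily_pointWindow hbM] at h
    simpa only [Pi.zero_apply, phase_ne_zero, mul_eq_zero, inv_eq_zero, Complex.ofReal_eq_zero,
      Real.sqrt_eq_zero', Nat.cast_nonpos, NeZero.ne M, false_or] using h
  ext j
  by_cases hj : (j : ZMod N) ∈ T
  · obtain ⟨⟨l, t⟩, hlt⟩ := hrange hj
    obtain ⟨n, hn⟩ := (ZMod.intCast_eq_intCast_iff_dvd_sub _ _ _).mp hlt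
    have := congrFun ((LinearEquiv.map_eq_zero_iff _).mp (dft_eq_zero n l)) t
    rwa [show b (l, t) + n * N = j by linear_combination -hn] at this
  · exact mem_supportedOn.mp hf j hj

end Sufficiency

section Equivalence

variable {M N d : ℕ} [NeZero M] [NeZero N] {ι : Type*} [Fintype ι]

theorem exists_orthonormal_gaborFamily {T : Set (ZMod N)}
    (hcount : ∀ r : ZMod (M.gcd N), residueCount (Nat.gcd_dvd_right M N) T r =
      residueCount (Nat.gcd_dvd_left M N) Set.univ r * Fintype.card ι) :
    ∃ g : ι → ℓ², (∀ l, g l ∈ supportedOn (Int.cast ⁻¹' T)) ∧ Orthonormal ℂ (gaborFamily M N g) ∧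
      IsCompleteIn (supportedOn (Int.cast ⁻¹' T)) (gaborFamily M N g) := by
  obtain ⟨b, hbM, hinj, hrange⟩ := exists_points_of_residueCount_eq hcount
  exact ⟨pointWindow b,
    pointWindow_mem_supportedOn fun x ↦ hrange.subset (Set.mem_range_self x),
    orthonormal_gaborFamily_pointWindow hbM hinj,
    isCompleteIn_gaborFamily_pointWindow hbM hrange.superset⟩

theorem tfae_exists_gaborFamily_basis (hd : M.gcd N = d) (hdM : d ∣ M) (hdN : d ∣ N)
    (T : Set (ZMod N)) : List.TFAE [
      ∃ g : ι → ℓ², (∀ l, g l ∈ supportedOn (Int.cast ⁻¹' T)) ∧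
        Orthonormal ℂ (gaborFamily M N g) ∧
        IsCompleteIn (supportedOn (Int.cast ⁻¹' T)) (gaborFamily M N g),
      ∃ g : ι → ℓ², (∀ l, g l ∈ supportedOn (Int.cast ⁻¹' T)) ∧
        (∃ A B : ℝ, 0 < A ∧ A ≤ B ∧ IsRieszSequence ℂ (gaborFamily M N g) A B) ∧
        IsCompleteIn (supportedOn (Int.cast ⁻¹' T)) (gaborFamily M N g),
      ∀ r : ZMod d, residueCount hdN T r = residueCount hdM Set.univ r * Fintype.card ι] := by
  tfae_have 1 → 2 := fun ⟨g, hg, horth, hcomplete⟩ ↦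
    ⟨g, hg, ⟨1, 1, one_pos, le_rfl, isRieszSequence_of_orthonormal horth⟩, hcomplete⟩
  tfae_have 2 → 3 := fun ⟨_, hg, ⟨_, _, hA, hAB, hriesz⟩, hcomplete⟩ ↦
    hriesz.residueCount_eq hA (hA.le.trans hAB) hg hcomplete hdM hdN
  tfae_have 3 → 1 := by
    subst hd
    exact exists_orthonormal_gaborFamily
  tfae_finish

end Equivalence

section Arithmetic

variable {p q d : ℕ}

lemma injective_intCast_add_mul [NeZero d] (hpq : p.Coprime q) (j : ℤ) :
    Function.Injective fun k : Fin p ↦ ((j + (k : ℕ) * (q * d : ℕ) : ℤ) : ZMod (p * d)) := by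
  intro k k' h
  obtain ⟨c, hc⟩ := (ZMod.intCast_eq_intCast_iff_dvd_sub _ _ _).mp h
  have hdvd : (p : ℤ) ∣ ((k' : ℕ) - (k : ℕ)) * q := by
    refine ⟨c, mul_right_cancel₀ (b := (d : ℤ)) (mod_cast NeZero.ne d) ?_⟩
    push_cast at hc
    linear_combination hc
  have hmod := (Nat.isCoprime_iff_coprime.mpr hpq).dvd_of_dvd_mul_right hdvd
  exact Fin.ext <| Nat.ModEq.eq_of_lt_of_lt (Nat.modEq_iff_dvd.mpr hmod) k.isLt k'.isLt

lemma range_intCast_add_mul [NeZero p] (hpq : p.Coprime q) (j : ℤ) :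
    (Set.range fun k : Fin p ↦ ((j + (k : ℕ) * (q * d : ℕ) : ℤ) : ZMod (p * d))) =
      {s | ZMod.castHom (Dvd.intro_left p rfl) (ZMod d) s = j} := by
  refine Set.Subset.antisymm (Set.range_subset_iff.mpr fun k ↦ by simp) fun s hs ↦ ?_
  obtain ⟨i, rfl⟩ := ZMod.intCast_surjective s
  obtain ⟨c, hc⟩ := (ZMod.intCast_eq_intCast_iff_dvd_sub _ _ _).mp
    ((map_intCast _ i).symm.trans hs)
  let k : ZMod p := -c * (q : ZMod p)⁻¹
  have hk : ((-c : ℤ) : ZMod p) = ((k.val * q : ℤ) : ZMod p) := by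
    have hunit : IsUnit (q : ZMod p) := (ZMod.isUnit_iff_coprime q p).mpr hpq.symm
    push_cast
    rw [ZMod.natCast_zmod_val, mul_assoc, ZMod.inv_mul_of_unit _ hunit, mul_one]
  obtain ⟨e, he⟩ := (ZMod.intCast_eq_intCast_iff_dvd_sub _ _ _).mp hk
  refine ⟨⟨k.val, k.val_lt⟩, (ZMod.intCast_eq_intCast_iff_dvd_sub _ _ _).mpr ⟨-e, ?_⟩⟩
  push_cast
  linear_combination -hc - d * he

lemma residueCount_eq_natCard [NeZero p] [NeZero d] (hpq : p.Coprime q) (T : Set (ZMod (p * d)))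
    (j : ℤ) :
    residueCount (Dvd.intro_left p rfl) T (j : ZMod d) =
      Nat.card {k : Fin p // j + (k : ℕ) * ((q * d : ℕ) : ℤ) ∈ (Int.cast ⁻¹' T : Set ℤ)} := by
  have hinj := injective_intCast_add_mul (d := d) hpq j
  set f := fun k : Fin p ↦ ((j + (k : ℕ) * (q * d : ℕ) : ℤ) : ZMod (p * d))
  calc residueCount (Dvd.intro_left p rfl) T (j : ZMod d) = (T ∩ Set.range f).ncard := by
        rw [range_intCast_add_mul hpq]
        rfl
    _ = (f ⁻¹' T).ncard := by
        rw [← Set.image_preimage_eq_inter_range, Set.ncard_image_of_injective _ hinj]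
    _ = _ := (Nat.card_coe_set_eq _).symm

lemma residueCount_univ [NeZero q] [NeZero d] (r : ZMod d) :
    residueCount (Dvd.intro_left q rfl : d ∣ q * d) Set.univ r = q := by
  obtain ⟨j, rfl⟩ := ZMod.intCast_surjective r
  rw [residueCount_eq_natCard (Nat.coprime_one_right q)]
  simp

lemma forall_residueCount_eq_iff [NeZero p] [NeZero q] [NeZero d] (hpq : p.Coprime q) (L : ℕ)
    (T : Set (ZMod (p * d))) :
    (∀ r : ZMod d, residueCount (Dvd.intro_left p rfl) T r =
      residueCount (Dvd.intro_left q rfl : d ∣ q * d) Set.univ r * L) ↔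
    ∀ j : ℤ, 0 ≤ j → j < d →
      Nat.card {k : Fin p // j + (k : ℕ) * ((q * d : ℕ) : ℤ) ∈ (Int.cast ⁻¹' T : Set ℤ)} =
        q * L := by
  simp only [residueCount_univ, ← residueCount_eq_natCard hpq]
  refine ⟨fun h j _ _ ↦ h j, fun h r ↦ ?_⟩
  simpa using h r.val (Nat.cast_nonneg _) (mod_cast r.val_lt)

lemma exists_intCast_preimage_eq {N : ℕ} {S : Set ℤ} (hper : ∀ j ∈ S, ∀ n : ℤ, j + n * N ∈ S) :
    ∃ T : Set (ZMod N), Int.cast ⁻¹' T = S := by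
  refine ⟨Int.cast '' S, (Set.subset_preimage_image _ S).antisymm' ?_⟩
  rintro i ⟨j, hj, hij⟩
  obtain ⟨n, hn⟩ := (ZMod.intCast_eq_intCast_iff_dvd_sub j i N).mp hij
  simpa [mul_comm n, ← hn] using hper j hj n

end Arithmetic

/-- Equivalence: existence of `g` making `𝒢(g,L,M,N)` an orthonormal basis of
`ℓ²(𝕊)`, existence of `g` making it a Riesz basis of `ℓ²(𝕊)`, and the
condition `card 𝒦_j = qL` for all `j ∈ {0,...,M/q-1}`. -/
theorem stmt19 (M N p q L : ℕ) (hM : 0 < M) (hN : 0 < N) (hp : 0 < p) (hq : 0 < q)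
    (hL : 0 < L) (hpq : Nat.Coprime p q) (hMN : q * N = p * M)
    (S : Set ℤ) (hper : ∀ j ∈ S, ∀ n : ℤ, j + n * N ∈ S) :
    ((∃ g : Fin L → lp (fun _ : ℤ => ℂ) 2, (∀ l, ∀ j, j ∉ S → g l j = 0) ∧
        GaborOrthonormal M N L (fun l i => g l i) ∧
        GaborComplete M N L S (fun l i => g l i)) ↔
      (∀ j : ℤ, 0 ≤ j → j < ((M / q : ℕ) : ℤ) →
        Nat.card {k : Fin p // j + (k : ℕ) * (M : ℤ) ∈ S} = q * L)) ∧
    ((∃ g : Fin L → lp (fun _ : ℤ => ℂ) 2, (∀ l, ∀ j, j ∉ S → g l j = 0) ∧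
        (∃ A B : ℝ, 0 < A ∧ A ≤ B ∧
          GaborRieszSeq M N L (fun l i => g l i) A B) ∧
        GaborComplete M N L S (fun l i => g l i)) ↔
      (∀ j : ℤ, 0 ≤ j → j < ((M / q : ℕ) : ℤ) →
        Nat.card {k : Fin p // j + (k : ℕ) * (M : ℤ) ∈ S} = q * L)) := by
  obtain ⟨T, rfl⟩ := exists_intCast_preimage_eq hper
  obtain ⟨d, rfl⟩ : q ∣ M := hpq.symm.dvd_of_dvd_mul_left ⟨N, hMN.symm⟩
  obtain rfl : N = p * d := Nat.eq_of_mul_eq_mul_left hq (by rw [hMN]; ring)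
  have : NeZero p := ⟨hp.ne'⟩
  have : NeZero q := ⟨hq.ne'⟩
  have : NeZero d := ⟨(Nat.pos_of_mul_pos_left hM).ne'⟩
  have hgcd : (q * d).gcd (p * d) = d := by rw [Nat.gcd_mul_right, hpq.symm.gcd_eq_one, one_mul]
  have htfae := tfae_exists_gaborFamily_basis (ι := Fin L) hgcd (Dvd.intro_left q rfl)
    (Dvd.intro_left p rfl) T
  rw [Fintype.card_fin, forall_residueCount_eq_iff hpq] at htfae
  simp only [gaborOrthonormal_iff, gaborRieszSeq_iff, gaborComplete_iff, ← mem_supportedOn,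
    Nat.mul_div_cancel_left d hq]
  exact ⟨htfae.out 0 2, htfae.out 1 2⟩
end
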